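/- Let d ≥ 1, σ ∈ (0,1), 0 < λ ≤ Λ < ∞, and let 𝒜 be a nonempty index set. Assume: (a) for each β ∈ 𝒜, λ ≤ a_β(x,y) ≤ Λ, a_β is measurable in y, and |a_β(x,y) − a_β(x',y)| ≤ Λ ω_a(|x − x'|) for all x, x', y, where ω_a is a Dini function; (b) each f_β : ℝ^d → ℝ satisfies |f_β(x) − f_β(x')| ≤ ω_f(|x − x'|) for all x, x' with ω_f a Dini function; (c) u : ℝ^d → ℝ is bounded and [u]_{σ+ε;ℝ^d} < ∞ for some ε ∈ (0, 1−σ); (d) u solves inf_{β∈𝒜}(L_β u + f_β) = 0 in all of ℝ^d. Then there exists a constant C > 0 depending only on d, λ, Λ, ω_a, σ such that [u]_{σ;ℝ^d} ≤ C‖u‖_{L_∞(ℝ^d)} + C Σ_{k=1}^∞ ω_f(2^{−k}). -/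

import Mathlib

open MeasureTheory Metric Filter Set
open scoped ENNReal Topology

noncomputable section

/-- Hölder seminorm `[u]_{γ;Ω}` (valued in `ℝ≥0∞`). -/
def holderSemi {E F : Type*} [NormedAddCommGroup E] [NormedAddCommGroup F]
    (γ : ℝ) (Ω : Set E) (u : E → F) : ℝ≥0∞ :=
  ⨆ (x : E) (_ : x ∈ Ω) (y : E) (_ : y ∈ Ω) (_ : x ≠ y),
    ENNReal.ofReal (‖u x - u y‖ / ‖x - y‖ ^ γ)

/-- Zygmund seminorm `[u]_{Λ^α(Ω)}` (valued in `ℝ≥0∞`). -/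
def zygmundSemi {E : Type*} [NormedAddCommGroup E] (α : ℝ) (Ω : Set E) (u : E → ℝ) : ℝ≥0∞ :=
  ⨆ (x : E) (h : E) (_ : h ≠ 0) (_ : x ∈ Ω) (_ : x + h ∈ Ω) (_ : x - h ∈ Ω),
    ENNReal.ofReal (|u (x + h) + u (x - h) - 2 * u x| / ‖h‖ ^ α)

/-- The `L_∞` norm of `u` on `Ω` (valued in `ℝ≥0∞`). -/
def eSupNorm {E : Type*} (Ω : Set E) (u : E → ℝ) : ℝ≥0∞ :=
  ⨆ (x : E) (_ : x ∈ Ω), ENNReal.ofReal |u x|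

/-- A Dini function: nonnegative, nondecreasing on `(0,∞)`, with `∫_0^1 ω(r)/r dr < ∞`. -/
def IsDini (ω : ℝ → ℝ) : Prop :=
  (∀ r, 0 < r → 0 ≤ ω r) ∧ MonotoneOn ω (Set.Ioi (0:ℝ)) ∧
    IntegrableOn (fun r => ω r / r) (Set.Ioc (0:ℝ) 1)

/-!
The proof doubles the variables and couples by reflection. Let `φ = ∑ n, b n * tent n`, where
`tent n` grows like `r ^ (σ + κ)` up to the dyadic scale `R * 2⁻ⁿ` and like `r ^ (σ - κ)` beyond it,
and the summable weights `b n` dominate `ωa` and a multiple of `ωf` at these scales. The goal is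
`u x - u z ≤ M φ(‖x - z‖)`, since `φ(r) ≤ (∑ n, b n) r ^ σ`. For distances outside `(ρ, R)` this
follows from the regularity and the boundedness of `u`. Otherwise take `x`, `z` where
`(u x - u z) / φ(‖x - z‖)` is nearly maximal. The part `λ ‖y‖ ^ (-d - σ)` common to all kernels is
treated by pairing the increment `y` at `x` with its reflection in the hyperplane orthogonal to
`x - z` at `z`: this lengthens the distance as often as it shortens it, so the strict concavity of
`φ` contributes at most `-c M φ(r) r ^ (-σ)` to `L u x - L u z`, where `r = ‖x - z‖`. The difference
of the coefficients contributes at most a constant times `ωa(r) M ∑ n, b n`, and the data `ωf(r)`.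
As the weights dominate the moduli, these errors are smaller than the gain once `R` is small and `M`
is large, contradicting the equation.
-/

/-! ### Dyadic sums of Dini functions -/

namespace IsDini

variable {ω : ℝ → ℝ} {R : ℝ}

lemma half_le_setIntegral_div (hω : IsDini ω) (n : ℕ) :
    ω ((1 / 2) ^ (n + 1)) / 2 ≤ ∫ r in Ioc ((1 / 2 : ℝ) ^ (n + 1)) ((1 / 2) ^ n), ω r / r := by
  obtain ⟨hnonneg, hmono, hint⟩ := hω
  have hpos : (0 : ℝ) < (1 / 2) ^ (n + 1) := by positivity
  have hlen : (1 / 2 : ℝ) ^ n - (1 / 2) ^ (n + 1) = (1 / 2) ^ n / 2 := by ring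
  calc ω ((1 / 2) ^ (n + 1)) / 2
      = ∫ _r in Ioc ((1 / 2 : ℝ) ^ (n + 1)) ((1 / 2) ^ n), ω ((1 / 2) ^ (n + 1)) / (1 / 2) ^ n := by
        rw [setIntegral_const, Real.volume_real_Ioc, hlen, max_eq_left (by positivity), smul_eq_mul]
        field_simp
    _ ≤ ∫ r in Ioc ((1 / 2 : ℝ) ^ (n + 1)) ((1 / 2) ^ n), ω r / r := by
        refine setIntegral_mono_on (integrableOn_const (by simp))
          (hint.mono_set (Ioc_subset_Ioc hpos.le (pow_le_one₀ (by norm_num) (by norm_num))))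
          measurableSet_Ioc fun r hr => ?_
        have hr0 : 0 < r := hpos.trans hr.1
        exact div_le_div₀ (hnonneg r hr0) (hmono hpos hr0 hr.1.le) hr0 hr.2

lemma summable_half_pow (hω : IsDini ω) : Summable fun n : ℕ => ω ((1 / 2) ^ (n + 1)) := by
  have hanti : Antitone fun n : ℕ => (1 / 2 : ℝ) ^ n :=
    pow_right_anti₀ (by norm_num) (by norm_num)
  have hsub : ⋃ n : ℕ, Ioc ((1 / 2 : ℝ) ^ (n + 1)) ((1 / 2) ^ n) ⊆ Ioc 0 1 :=
    iUnion_subset fun n =>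
      Ioc_subset_Ioc (by positivity) (pow_le_one₀ (by norm_num) (by norm_num))
  have hsum := (hasSum_integral_iUnion (fun _ => measurableSet_Ioc)
    hanti.pairwise_disjoint_on_Ioc_succ (hω.2.2.mono_set hsub)).summable
  refine (summable_div_const_iff two_ne_zero).1
    (hsum.of_nonneg_of_le (fun n => ?_) hω.half_le_setIntegral_div)
  have := hω.1 ((1 / 2) ^ (n + 1)) (by positivity)
  positivity

lemma apply_mul_half_pow_le (hω : IsDini ω) (hR : R ∈ Ioc (0 : ℝ) (1 / 2)) (n : ℕ) :
    ω (R * (1 / 2) ^ n) ≤ ω ((1 / 2) ^ (n + 1)) := by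
  have hRpos := hR.1
  refine hω.2.1 (mem_Ioi.2 (by positivity)) (mem_Ioi.2 (by positivity)) ?_
  rw [pow_succ']
  gcongr
  exact hR.2

lemma summable_mul_half_pow (hω : IsDini ω) (hR : R ∈ Ioc (0 : ℝ) (1 / 2)) :
    Summable fun n : ℕ => ω (R * (1 / 2) ^ n) := by
  have hRpos := hR.1
  exact hω.summable_half_pow.of_nonneg_of_le (fun n => hω.1 _ (by positivity))
    (hω.apply_mul_half_pow_le hR)

lemma tsum_mul_half_pow_le (hω : IsDini ω) (hR : R ∈ Ioc (0 : ℝ) (1 / 2)) :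
    ∑' n : ℕ, ω (R * (1 / 2) ^ n) ≤ ∑' n : ℕ, ω ((1 / 2) ^ (n + 1)) :=
  (hω.summable_mul_half_pow hR).tsum_le_tsum (hω.apply_mul_half_pow_le hR) hω.summable_half_pow

end IsDini

lemma exists_tsum_mul_half_pow_le (ω : ℝ → ℝ) {θ : ℝ} (hθ : 0 < θ) :
    ∃ R ∈ Ioc (0 : ℝ) (1 / 2), ∑' n : ℕ, ω (R * (1 / 2) ^ n) ≤ θ := by
  obtain ⟨k, hk⟩ := ((tendsto_sum_nat_add fun n : ℕ => ω ((1 / 2) ^ (n + 1))).eventually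
    (eventually_le_nhds hθ)).exists
  have hmem : (1 / 2 : ℝ) ^ (k + 1) ∈ Ioc (0 : ℝ) (1 / 2) :=
    ⟨by positivity, pow_le_of_le_one (by norm_num) (by norm_num) k.succ_ne_zero⟩
  refine ⟨(1 / 2) ^ (k + 1), hmem, ?_⟩
  simpa only [mul_comm ((1 / 2 : ℝ) ^ (k + 1)), ← pow_add, ← add_assoc] using hk

/-! ### Strictly concave moduli -/

/-- Strict concavity with a gap `c` that is uniform over all scales: at every `r > 0` the symmetric
second difference with step comparable to `r` is at most `-c φ(r)`. -/
def HasConcavityGap (c : ℝ) (φ : ℝ → ℝ) : Prop :=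
  ∀ ⦃r t : ℝ⦄, 0 < r → r / 4 ≤ t → t ≤ r / 2 → φ (r + t) + φ (r - t) ≤ (2 - c) * φ r

namespace HasConcavityGap

variable {c : ℝ} {φ ψ : ℝ → ℝ}

protected lemma mono {c' : ℝ} (hφ : HasConcavityGap c φ) (hc : c' ≤ c)
    (hnonneg : ∀ r, 0 < r → 0 ≤ φ r) : HasConcavityGap c' φ := fun r t hr hrt htr =>
  (hφ hr hrt htr).trans (mul_le_mul_of_nonneg_right (by linarith) (hnonneg r hr))

lemma const_mul {M : ℝ} (hφ : HasConcavityGap c φ) (hM : 0 ≤ M) :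
    HasConcavityGap c fun r => M * φ r := fun r t hr hrt htr => by
  linarith [mul_le_mul_of_nonneg_left (hφ hr hrt htr) hM]

lemma comp_div {τ : ℝ} (hφ : HasConcavityGap c φ) (hτ : 0 < τ) :
    HasConcavityGap c fun r => φ (r / τ) := fun r t hr hrt htr => by
  simp only [add_div, sub_div]
  refine hφ (div_pos hr hτ) ?_ ?_
  · rw [div_right_comm]; gcongr
  · rw [div_right_comm]; gcongr

protected lemma min (hφ : HasConcavityGap c φ) (hψ : HasConcavityGap c ψ) :
    HasConcavityGap c fun r => min (φ r) (ψ r) := fun r t hr hrt htr => by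
  rcases min_choice (φ r) (ψ r) with h | h <;> simp only [h]
  · exact (add_le_add (min_le_left _ _) (min_le_left _ _)).trans (hφ hr hrt htr)
  · exact (add_le_add (min_le_right _ _) (min_le_right _ _)).trans (hψ hr hrt htr)

protected lemma tsum {ι : Type*} {f : ι → ℝ → ℝ} (hf : ∀ i, HasConcavityGap c (f i))
    (hsum : ∀ r, 0 < r → Summable fun i => f i r) :
    HasConcavityGap c fun r => ∑' i, f i r := fun r t hr hrt htr => by
  have hadd := hsum (r + t) (by linarith)
  have hsub := hsum (r - t) (by linarith)
  simp only [← hadd.tsum_add hsub, ← tsum_mul_left]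
  exact (hadd.add hsub).tsum_le_tsum (fun i => hf i hr hrt htr) ((hsum r hr).mul_left _)

end HasConcavityGap

lemma one_add_rpow_add_one_sub_rpow_lt_two {p s : ℝ} (hp : p ∈ Ioo (0 : ℝ) 1)
    (hs : s ∈ Ioc (0 : ℝ) 1) : (1 + s) ^ p + (1 - s) ^ p < 2 := by
  have hmid := (Real.strictConcaveOn_rpow hp.1 hp.2).2
    (show 1 + s ∈ Ici (0 : ℝ) from by simp only [mem_Ici]; linarith [hs.1])
    (show 1 - s ∈ Ici (0 : ℝ) from by simp only [mem_Ici]; linarith [hs.2])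
    (by linarith [hs.1]) one_half_pos one_half_pos (by norm_num)
  have hone : (1 / 2 * (1 + s) + 1 / 2 * (1 - s) : ℝ) = 1 := by ring
  simp only [smul_eq_mul, hone, Real.one_rpow] at hmid
  linarith

lemma exists_hasConcavityGap_rpow {p : ℝ} (hp : p ∈ Ioo (0 : ℝ) 1) :
    ∃ c, 0 < c ∧ HasConcavityGap c fun r => r ^ p := by
  have hcont : ContinuousOn (fun s : ℝ => (1 + s) ^ p + (1 - s) ^ p) (Icc (1 / 4) (1 / 2)) :=
    ((continuous_const.add continuous_id).rpow_const fun _ => Or.inr hp.1.le).add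
      ((continuous_const.sub continuous_id).rpow_const fun _ => Or.inr hp.1.le) |>.continuousOn
  obtain ⟨s, hs, hmax⟩ :=
    isCompact_Icc.exists_isMaxOn (nonempty_Icc.2 (by norm_num)) hcont
  refine ⟨2 - ((1 + s) ^ p + (1 - s) ^ p), sub_pos.2 ?_, fun r t hr hrt htr => ?_⟩
  · exact one_add_rpow_add_one_sub_rpow_lt_two hp
      ⟨by linarith [hs.1], by linarith [hs.2]⟩
  have hq : t / r ∈ Icc (1 / 4 : ℝ) (1 / 2) :=
    ⟨by rw [le_div_iff₀ hr]; linarith, by rw [div_le_iff₀ hr]; linarith⟩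
  have hplus : (r + t) ^ p = r ^ p * (1 + t / r) ^ p := by
    rw [← Real.mul_rpow hr.le (by linarith [hq.1]), mul_add, mul_div_cancel₀ _ hr.ne', mul_one]
  have hminus : (r - t) ^ p = r ^ p * (1 - t / r) ^ p := by
    rw [← Real.mul_rpow hr.le (by linarith [hq.2]), mul_sub, mul_div_cancel₀ _ hr.ne', mul_one]
  calc (r + t) ^ p + (r - t) ^ p = r ^ p * ((1 + t / r) ^ p + (1 - t / r) ^ p) := by
        rw [hplus, hminus, mul_add]
    _ ≤ r ^ p * ((1 + s) ^ p + (1 - s) ^ p) :=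
        mul_le_mul_of_nonneg_left (hmax hq) (by positivity)
    _ = _ := by ring

/-- The concave tent `min (s ^ (σ + κ)) (s ^ (σ - κ))`, peaked relative to `s ^ σ` at `s = 1` and
integrable against the kernel of order `σ` both at the origin and at infinity. -/
def powTent (σ κ s : ℝ) : ℝ := min (s ^ (σ + κ)) (s ^ (σ - κ))

/-- The copy of `powTent` peaked at scale `τ`, normalised so that its value at `τ` is `τ ^ σ`. -/
def powTentAt (σ κ τ r : ℝ) : ℝ := τ ^ σ * powTent σ κ (r / τ)

section PowTent

variable {σ κ τ r s : ℝ}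

lemma powTent_nonneg (hs : 0 ≤ s) : 0 ≤ powTent σ κ s := by unfold powTent; positivity

lemma powTent_le_rpow (hκ : 0 ≤ κ) (hs : 0 < s) : powTent σ κ s ≤ s ^ σ := by
  rcases le_total s 1 with h | h
  · exact (min_le_left _ _).trans (Real.rpow_le_rpow_of_exponent_ge hs h (by linarith))
  · exact (min_le_right _ _).trans (Real.rpow_le_rpow_of_exponent_le h (by linarith))

lemma rpow_div_two_le_powTent (hκ : 0 ≤ κ) (hκ1 : κ ≤ 1) (hs : 1 / 2 ≤ s) (hs1 : s ≤ 1) :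
    s ^ σ / 2 ≤ powTent σ κ s := by
  have hpos : 0 < s := by linarith
  have hhalf : 1 / 2 ≤ s ^ κ :=
    hs.trans (by simpa using Real.rpow_le_rpow_of_exponent_ge hpos hs1 hκ1)
  refine le_min ?_ ?_
  · rw [Real.rpow_add hpos]
    nlinarith [Real.rpow_pos_of_pos hpos σ]
  · exact (half_le_self (by positivity)).trans
      (Real.rpow_le_rpow_of_exponent_ge hpos hs1 (by linarith))

lemma monotoneOn_powTent (hκ : 0 ≤ κ) (hκσ : κ ≤ σ) : MonotoneOn (powTent σ κ) (Ici 0) :=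
  fun _ hs _ _ hst => min_le_min (Real.rpow_le_rpow hs hst (by linarith))
    (Real.rpow_le_rpow hs hst (by linarith))

lemma exists_hasConcavityGap_powTent (hκ : 0 ≤ κ) (hκσ : κ < σ) (hσκ : σ + κ < 1) :
    ∃ c, 0 < c ∧ HasConcavityGap c (powTent σ κ) := by
  obtain ⟨c₁, hc₁, h₁⟩ := exists_hasConcavityGap_rpow (p := σ + κ) ⟨by linarith, hσκ⟩
  obtain ⟨c₂, hc₂, h₂⟩ := exists_hasConcavityGap_rpow (p := σ - κ) ⟨by linarith, by linarith⟩
  exact ⟨min c₁ c₂, lt_min hc₁ hc₂,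
    (h₁.mono (min_le_left _ _) fun r hr => by positivity).min
      (h₂.mono (min_le_right _ _) fun r hr => by positivity)⟩

lemma HasConcavityGap.powTentAt {c : ℝ} (h : HasConcavityGap c (powTent σ κ)) (hτ : 0 < τ) :
    HasConcavityGap c (powTentAt σ κ τ) :=
  (h.comp_div hτ).const_mul (by positivity)

lemma powTentAt_nonneg (hτ : 0 ≤ τ) (hr : 0 ≤ r) : 0 ≤ powTentAt σ κ τ r :=
  mul_nonneg (by positivity) (powTent_nonneg (by positivity))

lemma rpow_mul_div_rpow (hτ : 0 < τ) (hr : 0 ≤ r) : τ ^ σ * (r / τ) ^ σ = r ^ σ := by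
  rw [← Real.mul_rpow hτ.le (by positivity), mul_div_cancel₀ _ hτ.ne']

lemma powTentAt_le_rpow (hκ : 0 ≤ κ) (hτ : 0 < τ) (hr : 0 < r) : powTentAt σ κ τ r ≤ r ^ σ := by
  rw [← rpow_mul_div_rpow hτ hr.le]
  exact mul_le_mul_of_nonneg_left (powTent_le_rpow hκ (by positivity)) (by positivity)

lemma rpow_div_two_le_powTentAt (hκ : 0 ≤ κ) (hκ1 : κ ≤ 1) (hτ : 0 < τ) (hr : τ / 2 ≤ r)
    (hrτ : r ≤ τ) : r ^ σ / 2 ≤ powTentAt σ κ τ r := by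
  rw [← rpow_mul_div_rpow hτ (by linarith), mul_div_assoc]
  refine mul_le_mul_of_nonneg_left (rpow_div_two_le_powTent hκ hκ1 ?_ ?_) (by positivity)
  · rw [le_div_iff₀ hτ]; linarith
  · rwa [div_le_one hτ]

lemma monotoneOn_powTentAt (hκ : 0 ≤ κ) (hκσ : κ ≤ σ) (hτ : 0 < τ) :
    MonotoneOn (powTentAt σ κ τ) (Ici 0) := fun r hr t ht hrt =>
  mul_le_mul_of_nonneg_left (monotoneOn_powTent hκ hκσ (div_nonneg hr hτ.le)
    (div_nonneg ht hτ.le) (by gcongr)) (by positivity)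

end PowTent

/-! ### The kernel of order `σ` -/

/-- The homogeneous kernel `‖y‖ ^ (-d - σ)`, with `d` the dimension of `E`. -/
def fracKernel {E : Type*} [NormedAddCommGroup E] [NormedSpace ℝ E] (σ : ℝ) (y : E) : ℝ :=
  ‖y‖ ^ (-(Module.finrank ℝ E : ℝ) - σ)

section Kernel

variable {E : Type*} [NormedAddCommGroup E] [NormedSpace ℝ E] {σ κ p q τ : ℝ}

lemma fracKernel_nonneg (y : E) : 0 ≤ fracKernel σ y := by unfold fracKernel; positivity

lemma fracKernel_zero (hσ : 0 < σ) : fracKernel σ (0 : E) = 0 := by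
  rw [fracKernel, norm_zero, Real.zero_rpow]
  linarith [(Module.finrank ℝ E).cast_nonneg (α := ℝ)]

lemma fracKernel_congr_norm {y z : E} (h : ‖y‖ = ‖z‖) : fracKernel σ y = fracKernel σ z := by
  simp only [fracKernel, h]

lemma fracKernel_inv_smul (hτ : 0 < τ) (y : E) :
    fracKernel σ (τ⁻¹ • y) = τ ^ Module.finrank ℝ E * τ ^ σ * fracKernel σ y := by
  simp only [fracKernel]
  rw [norm_smul, Real.norm_of_nonneg (inv_nonneg.2 hτ.le),
    Real.mul_rpow (inv_nonneg.2 hτ.le) (norm_nonneg y), Real.inv_rpow hτ.le, ← Real.rpow_neg hτ.le,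
    neg_sub, sub_neg_eq_add, Real.rpow_add hτ, Real.rpow_natCast, mul_comm (τ ^ σ)]

lemma powTentAt_norm_mul_fracKernel (hτ : 0 < τ) (y : E) :
    powTentAt σ κ τ ‖y‖ * fracKernel σ y =
      (τ ^ Module.finrank ℝ E)⁻¹ * (powTent σ κ ‖τ⁻¹ • y‖ * fracKernel σ (τ⁻¹ • y)) := by
  rw [fracKernel_inv_smul hτ, norm_smul, Real.norm_of_nonneg (inv_nonneg.2 hτ.le), powTentAt,
    div_eq_inv_mul]
  field_simp

variable [MeasurableSpace E] [BorelSpace E]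

@[fun_prop]
lemma measurable_fracKernel : Measurable (fracKernel σ : E → ℝ) := by
  unfold fracKernel
  fun_prop

variable [FiniteDimensional ℝ E]

lemma integrable_min_rpow_mul_fracKernel (μ : Measure E) [μ.IsAddHaarMeasure] (hp : σ < p)
    (hq : q < σ) : Integrable (fun y : E => min (‖y‖ ^ p) (‖y‖ ^ q) * fracKernel σ y) μ := by
  rcases subsingleton_or_nontrivial E with hE | hE
  · simp only [hE.elim _ (0 : E)]
    exact integrable_const _
  set d := Module.finrank ℝ E with hd
  have hmeas : Measurable fun r : ℝ =>
      r ^ (d - 1) • (min (r ^ p) (r ^ q) * r ^ (-(d : ℝ) - σ)) := by fun_prop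
  have hradial (s : ℝ) {r : ℝ} (hr : 0 < r) :
      r ^ (d - 1) * (r ^ s * r ^ (-(d : ℝ) - σ)) = r ^ (s - 1 - σ) := by
    rw [← Real.rpow_natCast, ← Real.rpow_add hr, ← Real.rpow_add hr,
      Nat.cast_sub Module.finrank_pos]
    congr 1
    push_cast
    ring
  refine (integrable_fun_norm_addHaar μ
    (f := fun r => min (r ^ p) (r ^ q) * r ^ (-(d : ℝ) - σ))).2 ?_
  rw [← hd, ← Ioc_union_Ioi_eq_Ioi (zero_le_one' ℝ)]
  refine IntegrableOn.union ?_ ?_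
  · have hdom : IntegrableOn (fun r : ℝ => r ^ (p - 1 - σ)) (Ioc 0 1) := by
      rw [integrableOn_Ioc_iff_integrableOn_Ioo, intervalIntegral.integrableOn_Ioo_rpow_iff one_pos]
      linarith
    refine hdom.mono' hmeas.aestronglyMeasurable (ae_restrict_of_forall_mem measurableSet_Ioc ?_)
    intro r hr
    have hr0 := hr.1
    rw [Real.norm_of_nonneg (by positivity), ← hradial p hr0, smul_eq_mul]
    gcongr
    exact min_le_left _ _
  · have hdom : IntegrableOn (fun r : ℝ => r ^ (q - 1 - σ)) (Ioi 1) :=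
      integrableOn_Ioi_rpow_of_lt (by linarith) one_pos
    refine hdom.mono' hmeas.aestronglyMeasurable (ae_restrict_of_forall_mem measurableSet_Ioi ?_)
    intro r hr
    have hr0 : 0 < r := one_pos.trans hr
    rw [Real.norm_of_nonneg (by positivity), ← hradial q hr0, smul_eq_mul]
    gcongr
    exact min_le_right _ _

lemma integrable_powTentAt_mul_fracKernel (μ : Measure E) [μ.IsAddHaarMeasure] (hκ : 0 < κ)
    (hτ : 0 < τ) : Integrable (fun y : E => powTentAt σ κ τ ‖y‖ * fracKernel σ y) μ := by
  simp only [powTentAt_norm_mul_fracKernel hτ]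
  refine Integrable.const_mul (Integrable.comp_smul
    (f := fun y => powTent σ κ ‖y‖ * fracKernel σ y) ?_ (inv_ne_zero hτ.ne')) _
  exact integrable_min_rpow_mul_fracKernel μ (by linarith) (by linarith)

lemma integral_powTentAt_mul_fracKernel (μ : Measure E) [μ.IsAddHaarMeasure] (hτ : 0 < τ) :
    ∫ y : E, powTentAt σ κ τ ‖y‖ * fracKernel σ y ∂μ =
      ∫ y : E, powTent σ κ ‖y‖ * fracKernel σ y ∂μ := by
  simp only [powTentAt_norm_mul_fracKernel hτ]
  rw [integral_const_mul,
    μ.integral_comp_inv_smul (fun y => powTent σ κ ‖y‖ * fracKernel σ y), smul_eq_mul,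
    abs_of_pos (by positivity), inv_mul_cancel_left₀ (by positivity)]

variable {H η : ℝ}

lemma min_const_mul_rpow_le (hη : 0 ≤ η) {t : ℝ} (ht : 0 ≤ t) :
    min (H * t ^ p) η ≤ max H η * min (t ^ p) (t ^ (0 : ℝ)) := by
  rw [mul_min_of_nonneg _ _ (hη.trans (le_max_right _ _)), Real.rpow_zero, mul_one]
  exact min_le_min (mul_le_mul_of_nonneg_right (le_max_left _ _) (by positivity))
    (le_max_right _ _)

lemma integrable_min_mul_rpow_mul_fracKernel (μ : Measure E) [μ.IsAddHaarMeasure] (hσ : 0 < σ)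
    (hp : σ < p) (hH : 0 ≤ H) (hη : 0 ≤ η) :
    Integrable (fun y : E => min (H * ‖y‖ ^ p) η * fracKernel σ y) μ := by
  refine ((integrable_min_rpow_mul_fracKernel μ hp hσ).const_mul (max H η)).mono'
    (by fun_prop) (ae_of_all _ fun y => ?_)
  have hk := fracKernel_nonneg (σ := σ) y
  rw [Real.norm_of_nonneg (by positivity), ← mul_assoc]
  exact mul_le_mul_of_nonneg_right (min_const_mul_rpow_le hη (norm_nonneg y)) hk

lemma tendsto_integral_min_mul_rpow_mul_fracKernel (μ : Measure E) [μ.IsAddHaarMeasure]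
    (hσ : 0 < σ) (hp : σ < p) (hH : 0 ≤ H) :
    Tendsto (fun η : ℝ => ∫ y : E, min (H * ‖y‖ ^ p) η * fracKernel σ y ∂μ) (𝓝[>] 0) (𝓝 0) := by
  have hlim (y : E) : Tendsto (fun η : ℝ => min (H * ‖y‖ ^ p) η * fracKernel σ y) (𝓝[>] 0)
      (𝓝 0) := by
    have hcont : Continuous fun η : ℝ => min (H * ‖y‖ ^ p) η * fracKernel σ y := by fun_prop
    have hzero : min (H * ‖y‖ ^ p) 0 = 0 := min_eq_right (by positivity)
    simpa only [hzero, zero_mul] using (hcont.tendsto 0).mono_left nhdsWithin_le_nhds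
  simpa only [integral_zero] using tendsto_integral_filter_of_dominated_convergence
    (fun y : E => min (H * ‖y‖ ^ p) 1 * fracKernel σ y)
    (Eventually.of_forall fun η => by fun_prop)
    (by
      filter_upwards [Ioo_mem_nhdsGT (zero_lt_one' ℝ)] with η hη
      refine ae_of_all _ fun y => ?_
      have hη0 : 0 ≤ η := hη.1.le
      have hk := fracKernel_nonneg (σ := σ) y
      rw [Real.norm_of_nonneg (by positivity)]
      gcongr
      exact hη.2.le)
    (integrable_min_mul_rpow_mul_fracKernel μ hσ hp hH zero_le_one) (ae_of_all _ hlim)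

lemma exists_mul_integral_min_lt (μ : Measure E) [μ.IsAddHaarMeasure] (hσ : 0 < σ) (hp : σ < p)
    {H δ ε : ℝ} (hH : 0 ≤ H) (A : ℝ) (hδ : 0 < δ) (hε : 0 < ε) :
    ∃ η, 0 < η ∧ η ≤ δ ∧ A * ∫ y : E, min (H * ‖y‖ ^ p) η * fracKernel σ y ∂μ < ε := by
  have hlim := (tendsto_integral_min_mul_rpow_mul_fracKernel (E := E) μ hσ hp hH).const_mul A
  rw [mul_zero] at hlim
  have hnear : ∀ᶠ η in 𝓝[>] (0 : ℝ), η ∈ Ioc 0 δ := Ioc_mem_nhdsGT hδ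
  obtain ⟨η, hη, hlt⟩ := (hnear.and (hlim.eventually (eventually_lt_nhds hε))).exists
  exact ⟨η, hη.1, hη.2, hlt⟩

end Kernel

/-! ### The Dini modulus -/

lemma integrable_tsum_of_nonneg {α ι : Type*} [MeasurableSpace α] {μ : Measure α} [Countable ι]
    {f : ι → α → ℝ} (hf : ∀ i a, 0 ≤ f i a) (hint : ∀ i, Integrable (f i) μ)
    (hsum : Summable fun i => ∫ a, f i a ∂μ) : Integrable (fun a => ∑' i, f i a) μ := by
  have htoReal (a : α) : ∑' i, f i a = (∑' i, ENNReal.ofReal (f i a)).toReal := by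
    rw [ENNReal.tsum_toReal_eq fun _ => ENNReal.ofReal_ne_top]
    simp only [ENNReal.toReal_ofReal (hf _ a)]
  have hmeas (i : ι) : AEMeasurable (fun a => ENNReal.ofReal (f i a)) μ :=
    (hint i).aemeasurable.ennreal_ofReal
  simp only [htoReal]
  refine integrable_toReal_of_lintegral_ne_top (AEMeasurable.tsum hmeas) ?_
  rw [lintegral_tsum hmeas]
  simp only [← ofReal_integral_eq_lintegral_ofReal (hint _) (ae_of_all _ (hf _))]
  exact hsum.tsum_ofReal_ne_top

lemma exists_dyadic_scale {R r : ℝ} (hr : 0 < r) (N : ℕ) (hrR : r ≤ R * (1 / 2) ^ N) :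
    ∃ n ≥ N, R * (1 / 2) ^ (n + 1) ≤ r ∧ r ≤ R * (1 / 2) ^ n := by
  have hpos : 0 < R * (1 / 2) ^ N := hr.trans_le hrR
  obtain ⟨m, hlo, hhi⟩ := exists_nat_pow_near_of_lt_one (div_pos hr hpos)
    ((div_le_one hpos).2 hrR) one_half_pos one_half_lt_one
  rw [lt_div_iff₀' hpos] at hlo
  rw [div_le_iff₀' hpos] at hhi
  refine ⟨N + m, N.le_add_right m, ?_, ?_⟩
  · rw [add_assoc, pow_add, ← mul_assoc]; exact hlo.le
  · rwa [pow_add, ← mul_assoc]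

/-- The superposition `∑ₙ bₙ ψₙ` of tents `ψₙ` of order `σ` peaked at the dyadic scales
`R / 2 ^ n`. At distances `r ≈ R / 2 ^ n` it dominates `bₙ r ^ σ`. -/
def diniModulus (σ κ R : ℝ) (b : ℕ → ℝ) (r : ℝ) : ℝ :=
  ∑' n, b n * powTentAt σ κ (R * (1 / 2) ^ n) r

section DiniModulus

variable {σ κ R r : ℝ} {b : ℕ → ℝ}

lemma mul_powTentAt_nonneg (hb : ∀ n, 0 ≤ b n) (hR : 0 < R) (hr : 0 ≤ r) (n : ℕ) :
    0 ≤ b n * powTentAt σ κ (R * (1 / 2) ^ n) r :=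
  mul_nonneg (hb n) (powTentAt_nonneg (by positivity) hr)

lemma diniModulus_nonneg (hb : ∀ n, 0 ≤ b n) (hR : 0 < R) (hr : 0 ≤ r) :
    0 ≤ diniModulus σ κ R b r :=
  tsum_nonneg (mul_powTentAt_nonneg hb hR hr)

lemma summable_mul_powTentAt (hκ : 0 ≤ κ) (hb : ∀ n, 0 ≤ b n) (hsum : Summable b) (hR : 0 < R)
    (hr : 0 < r) : Summable fun n => b n * powTentAt σ κ (R * (1 / 2) ^ n) r :=
  (hsum.mul_right (r ^ σ)).of_nonneg_of_le (mul_powTentAt_nonneg hb hR hr.le)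
    fun n => mul_le_mul_of_nonneg_left (powTentAt_le_rpow hκ (by positivity) hr) (hb n)

lemma diniModulus_le (hκ : 0 ≤ κ) (hb : ∀ n, 0 ≤ b n) (hsum : Summable b) (hR : 0 < R)
    (hr : 0 < r) : diniModulus σ κ R b r ≤ (∑' n, b n) * r ^ σ := by
  rw [← tsum_mul_right]
  exact (summable_mul_powTentAt hκ hb hsum hR hr).tsum_le_tsum
    (fun n => mul_le_mul_of_nonneg_left (powTentAt_le_rpow hκ (by positivity) hr) (hb n))
    (hsum.mul_right _)

lemma monotoneOn_diniModulus (hκ : 0 ≤ κ) (hκσ : κ ≤ σ) (hb : ∀ n, 0 ≤ b n) (hsum : Summable b)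
    (hR : 0 < R) : MonotoneOn (diniModulus σ κ R b) (Ioi 0) := fun r hr t ht hrt =>
  (summable_mul_powTentAt hκ hb hsum hR hr).tsum_le_tsum
    (fun n => mul_le_mul_of_nonneg_left (monotoneOn_powTentAt hκ hκσ (by positivity)
      (Ioi_subset_Ici_self hr) (Ioi_subset_Ici_self ht) hrt) (hb n))
    (summable_mul_powTentAt hκ hb hsum hR ht)

lemma mul_rpow_div_two_le_diniModulus (hκ : 0 ≤ κ) (hκ1 : κ ≤ 1) (hb : ∀ n, 0 ≤ b n)
    (hsum : Summable b) (hR : 0 < R) {n : ℕ} (hr : R * (1 / 2) ^ (n + 1) ≤ r)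
    (hrR : r ≤ R * (1 / 2) ^ n) : b n * (r ^ σ / 2) ≤ diniModulus σ κ R b r := by
  have hpos : 0 < r := lt_of_lt_of_le (by positivity) hr
  refine (mul_le_mul_of_nonneg_left (rpow_div_two_le_powTentAt hκ hκ1 (by positivity) ?_ hrR)
    (hb n)).trans ((summable_mul_powTentAt hκ hb hsum hR hpos).le_tsum n
      fun m _ => mul_powTentAt_nonneg hb hR hpos.le m)
  rwa [pow_succ, ← mul_assoc, mul_one_div] at hr

lemma mul_rpow_le_two_mul_diniModulus (hκ : 0 ≤ κ) (hκ1 : κ ≤ 1) (hb : ∀ n, 0 ≤ b n)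
    (hsum : Summable b) (hR : 0 < R) {θ : ℝ} (hθ : θ ≤ b 0) :
    θ * R ^ σ ≤ 2 * diniModulus σ κ R b R := by
  have hlow := mul_rpow_div_two_le_diniModulus (σ := σ) (n := 0) (r := R) hκ hκ1 hb hsum hR
    (by linarith) (by simp)
  linarith [mul_le_mul_of_nonneg_right hθ (by positivity : 0 ≤ R ^ σ)]

lemma diniModulus_pos (hκ : 0 ≤ κ) (hκ1 : κ ≤ 1) (hκσ : κ ≤ σ) (hb : ∀ n, 0 < b n)
    (hsum : Summable b) (hR : 0 < R) (hr : 0 < r) : 0 < diniModulus σ κ R b r := by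
  have hb' (n : ℕ) : 0 ≤ b n := (hb n).le
  have hmin : 0 < min r R := lt_min hr hR
  obtain ⟨n, -, hlo, hhi⟩ := exists_dyadic_scale (R := R) hmin 0 (by simp)
  calc 0 < b n * (min r R ^ σ / 2) := mul_pos (hb n) (by positivity)
    _ ≤ diniModulus σ κ R b (min r R) :=
      mul_rpow_div_two_le_diniModulus hκ hκ1 hb' hsum hR hlo hhi
    _ ≤ diniModulus σ κ R b r :=
      monotoneOn_diniModulus hκ hκσ hb' hsum hR hmin hr (min_le_left r R)

lemma mul_rpow_le_mul_diniModulus (hκ : 0 ≤ κ) (hκ1 : κ ≤ 1) (hb : ∀ n, 0 ≤ b n)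
    (hsum : Summable b) {ω : ℝ → ℝ} (hω : MonotoneOn ω (Ioi 0)) {A : ℝ} (hA : 0 ≤ A)
    (hωb : ∀ n : ℕ, ω (R * (1 / 2) ^ n) ≤ A * b n) (hr : 0 < r) (hrR : r ≤ R) :
    ω r * r ^ σ ≤ 2 * A * diniModulus σ κ R b r := by
  have hR : 0 < R := hr.trans_le hrR
  obtain ⟨n, -, hlo, hhi⟩ := exists_dyadic_scale hr 0 (by simpa using hrR)
  have hωr : ω r ≤ A * b n := (hω hr (hr.trans_le hhi) hhi).trans (hωb n)
  calc ω r * r ^ σ ≤ A * b n * r ^ σ := mul_le_mul_of_nonneg_right hωr (by positivity)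
    _ = 2 * A * (b n * (r ^ σ / 2)) := by ring
    _ ≤ 2 * A * diniModulus σ κ R b r := by
      gcongr
      exact mul_rpow_div_two_le_diniModulus hκ hκ1 hb hsum hR hlo hhi

lemma HasConcavityGap.diniModulus {c : ℝ} (h : HasConcavityGap c (powTent σ κ)) (hκ : 0 ≤ κ)
    (hb : ∀ n, 0 ≤ b n) (hsum : Summable b) (hR : 0 < R) :
    HasConcavityGap c (diniModulus σ κ R b) :=
  .tsum (fun n => (h.powTentAt (by positivity)).const_mul (hb n))
    fun _ hr => summable_mul_powTentAt hκ hb hsum hR hr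

variable {E : Type*} [NormedAddCommGroup E] [NormedSpace ℝ E] [MeasurableSpace E] [BorelSpace E]
  [FiniteDimensional ℝ E] (μ : Measure E) [μ.IsAddHaarMeasure]

lemma integral_mul_powTentAt_mul_fracKernel (hR : 0 < R) (n : ℕ) :
    ∫ y : E, b n * powTentAt σ κ (R * (1 / 2) ^ n) ‖y‖ * fracKernel σ y ∂μ =
      b n * ∫ y : E, powTent σ κ ‖y‖ * fracKernel σ y ∂μ := by
  simp only [mul_assoc]
  rw [integral_const_mul,
    integral_powTentAt_mul_fracKernel μ (mul_pos hR (pow_pos one_half_pos n))]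

lemma integrable_diniModulus_mul_fracKernel (hκ : 0 < κ) (hb : ∀ n, 0 ≤ b n) (hsum : Summable b)
    (hR : 0 < R) : Integrable (fun y : E => diniModulus σ κ R b ‖y‖ * fracKernel σ y) μ := by
  simp only [diniModulus, ← tsum_mul_right]
  refine integrable_tsum_of_nonneg (fun n y => mul_nonneg
    (mul_powTentAt_nonneg hb hR (norm_nonneg y) n) (fracKernel_nonneg y)) (fun n => ?_) ?_
  · simp only [mul_assoc (b n)]
    exact (integrable_powTentAt_mul_fracKernel μ hκ (by positivity)).const_mul _
  · simp only [integral_mul_powTentAt_mul_fracKernel μ hR]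
    exact hsum.mul_right _

lemma integral_diniModulus_mul_fracKernel (hκ : 0 < κ) (hb : ∀ n, 0 ≤ b n) (hsum : Summable b)
    (hR : 0 < R) : ∫ y : E, diniModulus σ κ R b ‖y‖ * fracKernel σ y ∂μ =
      (∑' n, b n) * ∫ y : E, powTent σ κ ‖y‖ * fracKernel σ y ∂μ := by
  have hnonneg (n : ℕ) (y : E) :
      0 ≤ b n * powTentAt σ κ (R * (1 / 2) ^ n) ‖y‖ * fracKernel σ y :=
    mul_nonneg (mul_powTentAt_nonneg hb hR (norm_nonneg y) n) (fracKernel_nonneg y)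
  simp only [diniModulus, ← tsum_mul_right]
  rw [← integral_tsum_of_summable_integral_norm]
  · simp only [integral_mul_powTentAt_mul_fracKernel μ hR]
  · intro n
    simp only [mul_assoc (b n)]
    exact (integrable_powTentAt_mul_fracKernel μ hκ (by positivity)).const_mul _
  · simp only [Real.norm_of_nonneg (hnonneg _ _), integral_mul_powTentAt_mul_fracKernel μ hR]
    exact hsum.mul_right _

end DiniModulus

/-! ### Moduli of continuity -/

/-- `ω` is a modulus of continuity of `g`: `|g x - g z| ≤ ω ‖x - z‖` at distinct points, so that
the value `ω 0` plays no role. -/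
def HasModulus {E : Type*} [NormedAddCommGroup E] (ω : ℝ → ℝ) (g : E → ℝ) : Prop :=
  ∀ ⦃x z : E⦄, x ≠ z → |g x - g z| ≤ ω ‖x - z‖

section HasModulus

variable {E : Type*} [NormedAddCommGroup E] {g u : E → ℝ} {ω : ℝ → ℝ} {H p C γ : ℝ}

lemma hasModulus_of_sub_le (h : ∀ x z, x ≠ z → g x - g z ≤ ω ‖x - z‖) : HasModulus ω g :=
  fun x z hxz => abs_sub_le_iff.2 ⟨h x z hxz, norm_sub_rev x z ▸ h z x hxz.symm⟩

lemma HasModulus.sub_le (h : HasModulus ω g) {x z : E} (hxz : x ≠ z) : g x - g z ≤ ω ‖x - z‖ :=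
  (abs_sub_le_iff.1 (h hxz)).1

lemma HasModulus.mono (h : HasModulus ω g) {ω' : ℝ → ℝ} (hle : ∀ r, 0 < r → ω r ≤ ω' r) :
    HasModulus ω' g :=
  fun _ _ hxz => (h hxz).trans (hle _ (norm_sub_pos_iff.2 hxz))

lemma holderSemi_univ_le_ofReal_iff (hC : 0 ≤ C) :
    holderSemi γ univ g ≤ ENNReal.ofReal C ↔ HasModulus (fun r => C * r ^ γ) g := by
  simp only [holderSemi, iSup_le_iff, mem_univ, forall_const, ENNReal.ofReal_le_ofReal_iff hC,
    HasModulus]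
  refine forall₃_congr fun x z hxz => ?_
  rw [div_le_iff₀ (Real.rpow_pos_of_pos (norm_sub_pos_iff.2 hxz) γ), Real.norm_eq_abs]

lemma exists_hasModulus_of_holderSemi_lt_top (h : holderSemi γ univ g < ⊤) :
    ∃ H, 0 ≤ H ∧ HasModulus (fun r => H * r ^ γ) g :=
  ⟨_, ENNReal.toReal_nonneg, (holderSemi_univ_le_ofReal_iff ENNReal.toReal_nonneg).1
    (ENNReal.ofReal_toReal h.ne).ge⟩

lemma HasModulus.abs_add_sub_le (h : HasModulus (fun r => H * r ^ p) u) (hp : 0 < p) (x y : E) :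
    |u (x + y) - u x| ≤ H * ‖y‖ ^ p := by
  rcases eq_or_ne y 0 with rfl | hy
  · simp [hp.ne']
  · simpa using h (show x + y ≠ x by simpa using hy)

lemma HasModulus.continuous (h : HasModulus (fun r => H * r ^ p) u) (hp : 0 < p) :
    Continuous u := by
  refine continuous_iff_continuousAt.2 fun x => tendsto_iff_norm_sub_tendsto_zero.2 ?_
  have hlim : Tendsto (fun z => H * ‖z - x‖ ^ p) (𝓝 x) (𝓝 0) := by
    have hcont : Continuous fun z : E => H * ‖z - x‖ ^ p :=
      continuous_const.mul ((by fun_prop : Continuous fun z : E => ‖z - x‖).rpow_const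
        fun _ => Or.inr hp.le)
    simpa [hp.ne'] using hcont.tendsto x
  refine squeeze_zero (fun _ => norm_nonneg _) (fun z => ?_) hlim
  simpa using h.abs_add_sub_le hp x (z - x)

lemma HasModulus.increment_sub_le_min {Φ : ℝ → ℝ} {η : ℝ} {x z : E} (hu : HasModulus Φ u)
    (hH : HasModulus (fun r => H * r ^ p) u) (hp : 0 < p) (hxz : x ≠ z)
    (hη : Φ ‖x - z‖ - η ≤ u x - u z) (y : E) :
    u (x + y) - u x - (u (z + y) - u z) ≤ min (2 * H * ‖y‖ ^ p) η := by
  refine le_min ?_ ?_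
  · linarith [(abs_le.1 (hH.abs_add_sub_le hp x y)).2, (abs_le.1 (hH.abs_add_sub_le hp z y)).1]
  · have hshift := hu.sub_le (show x + y ≠ z + y by simpa using hxz)
    rw [add_sub_add_right_eq_sub] at hshift
    linarith

variable [NormedSpace ℝ E] [MeasurableSpace E] [BorelSpace E] [FiniteDimensional ℝ E]

lemma HasModulus.integrable_sub_mul_fracKernel (μ : Measure E) [μ.IsAddHaarMeasure] {σ B : ℝ}
    (h : HasModulus (fun r => H * r ^ p) u) (hH : 0 ≤ H) (hσ : 0 < σ) (hp : σ < p)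
    (hB : ∀ x z, u x - u z ≤ B) (x : E) :
    Integrable (fun y => (u (x + y) - u x) * fracKernel σ y) μ := by
  have hcont := h.continuous (hσ.trans hp)
  refine (integrable_min_mul_rpow_mul_fracKernel μ hσ hp hH
    (by simpa using hB x x)).mono' (by fun_prop) (ae_of_all _ fun y => ?_)
  rw [norm_mul, Real.norm_of_nonneg (fracKernel_nonneg y)]
  exact mul_le_mul_of_nonneg_right
    (le_min (h.abs_add_sub_le (hσ.trans hp) x y) (abs_sub_le_iff.2 ⟨hB _ _, hB _ _⟩))
    (fracKernel_nonneg y)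

end HasModulus

/-! ### Reflection coupling -/

section MeasurePreserving

variable {α : Type*} [MeasurableSpace α] {μ : Measure α} {s : Set α} {f g a : α → ℝ} {m M : ℝ}

lemma setIntegral_le_of_add_comp_le {T : α → α} (hT : MeasurePreserving T μ μ)
    (hTemb : MeasurableEmbedding T) (hTs : T ⁻¹' s = s) (hs : MeasurableSet s)
    (hf : IntegrableOn f s μ) (hg : IntegrableOn g s μ)
    (hfg : ∀ x ∈ s, f x + f (T x) ≤ 2 * g x) : ∫ x in s, f x ∂μ ≤ ∫ x in s, g x ∂μ := by
  have hfT : IntegrableOn (fun x => f (T x)) s μ := by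
    simpa only [hTs, Function.comp_def] using (hT.integrableOn_comp_preimage hTemb (s := s)).2 hf
  have hsymm : ∫ x in s, f (T x) ∂μ = ∫ x in s, f x ∂μ := by
    simpa only [hTs] using hT.setIntegral_preimage_emb hTemb f s
  have hdouble : ∫ x in s, (f x + f (T x)) ∂μ ≤ ∫ x in s, 2 * g x ∂μ :=
    setIntegral_mono_on (hf.add hfT) (hg.const_mul 2) hs hfg
  rw [integral_add hf hfT, hsymm, integral_const_mul] at hdouble
  linarith

lemma integrable_mul_of_mem_Icc (hf : Integrable f μ) (ha : Measurable a)
    (haM : ∀ x, a x ∈ Icc m M) : Integrable (fun x => f x * a x) μ :=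
  hf.mul_bdd ha.aestronglyMeasurable
    (ae_of_all _ fun x => abs_le_max_abs_abs (haM x).1 (haM x).2)

lemma integral_mul_le_of_mem_Icc (hs : MeasurableSet s) (hm : 0 ≤ m) (ha : Measurable a)
    (haM : ∀ x, a x ∈ Icc m M) (hf : Integrable f μ) (hg : Integrable g μ) (hg0 : ∀ x, 0 ≤ g x)
    (hfg : ∀ x, f x ≤ g x) :
    ∫ x, f x * a x ∂μ ≤ m * ∫ x in s, f x ∂μ + M * ∫ x, g x ∂μ := by
  have hsf : Integrable (fun x => s.indicator (fun x => m * f x) x) μ :=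
    (hf.const_mul m).indicator hs
  rw [← integral_const_mul m, ← integral_indicator hs, ← integral_const_mul M,
    ← integral_add hsf (hg.const_mul M)]
  refine integral_mono (integrable_mul_of_mem_Icc hf ha haM) (hsf.add (hg.const_mul M))
    fun x => ?_
  obtain ⟨hma, haM⟩ := haM x
  by_cases hx : x ∈ s
  · simp only [indicator_of_mem hx]
    nlinarith [mul_le_mul_of_nonneg_left (hfg x) (sub_nonneg.2 hma), hg0 x]
  · simp only [indicator_of_notMem hx, zero_add]
    nlinarith [mul_le_mul_of_nonneg_left (hfg x) (hm.trans hma), hg0 x]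

end MeasurePreserving

section Reflection

variable {E : Type*} [NormedAddCommGroup E] [InnerProductSpace ℝ E] {w x y z : E}

lemma reflection_orthogonal_singleton_apply (w y : E) :
    (ℝ ∙ w)ᗮ.reflection y = y - (2 * (inner ℝ w y / ‖w‖ ^ 2)) • w := by
  rw [Submodule.reflection_orthogonal_apply, Submodule.reflection_singleton_apply]
  simp only [RCLike.ofReal_real_eq_id, id]
  rw [mul_smul, neg_sub, two_smul, two_smul]

lemma inner_reflection_orthogonal_singleton (w y : E) :
    inner ℝ w ((ℝ ∙ w)ᗮ.reflection y) = -inner ℝ w y := by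
  rw [← Submodule.reflection_symm, ← LinearIsometryEquiv.inner_map_eq_flip,
    Submodule.reflection_orthogonalComplement_singleton_eq_neg, inner_neg_left]

/-- The displacements `y` for which the reflection coupling across `(ℝ ∙ w)ᗮ` changes the distance
`‖w‖` by an amount comparable to `‖w‖`. -/
def couplingSet (w : E) : Set E := {y | ‖y‖ ≤ ‖w‖ / 4 ∧ ‖w‖ ^ 2 / 8 ≤ |inner ℝ w y|}

lemma reflection_preimage_couplingSet (w : E) :
    (ℝ ∙ w)ᗮ.reflection ⁻¹' couplingSet w = couplingSet w := by
  ext y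
  simp only [couplingSet, mem_preimage, mem_ofPred_eq, LinearIsometryEquiv.norm_map,
    inner_reflection_orthogonal_singleton, abs_neg]

lemma abs_inner_le_of_mem_couplingSet (hy : y ∈ couplingSet w) :
    |inner ℝ w y| ≤ ‖w‖ ^ 2 / 4 := by
  nlinarith [abs_real_inner_le_norm w y, mul_le_mul_of_nonneg_left hy.1 (norm_nonneg w)]

lemma div_eight_le_norm_of_mem_couplingSet (hw : w ≠ 0) (hy : y ∈ couplingSet w) :
    ‖w‖ / 8 ≤ ‖y‖ := by
  have hpos : 0 < ‖w‖ := norm_pos_iff.2 hw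
  have hle := hy.2.trans (abs_real_inner_le_norm w y)
  exact le_of_mul_le_mul_left (by linarith) hpos

lemma ball_subset_couplingSet (w : E) :
    ball ((3 / 16 : ℝ) • w) (‖w‖ * (1 / 16)) ⊆ couplingSet w := by
  intro y hy
  obtain ⟨v, rfl⟩ : ∃ v, y = (3 / 16 : ℝ) • w + v := ⟨y - (3 / 16 : ℝ) • w, by abel⟩
  rw [mem_ball, dist_self_add_left] at hy
  have hinner : |inner ℝ w v| ≤ ‖w‖ * (‖w‖ * (1 / 16)) :=
    (abs_real_inner_le_norm w v).trans (mul_le_mul_of_nonneg_left hy.le (norm_nonneg w))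
  constructor
  · refine (norm_add_le _ _).trans ?_
    rw [norm_smul, Real.norm_of_nonneg (by norm_num)]
    linarith
  · refine le_trans ?_ (le_abs_self _)
    rw [inner_add_right, inner_smul_right, real_inner_self_eq_norm_sq]
    linarith [(abs_le.1 hinner).1]

lemma norm_add_sub_reflection (hw : w ≠ 0) (hy : y ∈ couplingSet w) :
    ‖w + y - (ℝ ∙ w)ᗮ.reflection y‖ = ‖w‖ + 2 * inner ℝ w y / ‖w‖ := by
  have hcoef : 0 ≤ 1 + 2 * (inner ℝ w y / ‖w‖ ^ 2) := by
    have : -(1 / 4) ≤ inner ℝ w y / ‖w‖ ^ 2 := by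
      rw [le_div_iff₀ (by positivity)]
      linarith [(abs_le.1 (abs_inner_le_of_mem_couplingSet hy)).1]
    linarith
  have hsmul : w + y - (ℝ ∙ w)ᗮ.reflection y = (1 + 2 * (inner ℝ w y / ‖w‖ ^ 2)) • w := by
    rw [reflection_orthogonal_singleton_apply, add_smul, one_smul]
    abel
  rw [hsmul, norm_smul, Real.norm_of_nonneg hcoef]
  field_simp

variable {Φ : ℝ → ℝ} {u : E → ℝ} {c : ℝ}

/- The two coupled pairs lie at distances `r + t` and `r - t` with `r = ‖x - z‖` and
`r / 4 ≤ |t| ≤ r / 2`. -/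
lemma HasModulus.add_sub_reflection_le (hu : HasModulus Φ u) (hΦ : HasConcavityGap c Φ)
    (hxz : x ≠ z) (hy : y ∈ couplingSet (x - z)) :
    (u (x + y) - u (z + (ℝ ∙ (x - z))ᗮ.reflection y)) +
      (u (x + (ℝ ∙ (x - z))ᗮ.reflection y) - u (z + y)) ≤ (2 - c) * Φ ‖x - z‖ := by
  have hw : x - z ≠ 0 := sub_ne_zero.2 hxz
  have hr : 0 < ‖x - z‖ := norm_pos_iff.2 hw
  have hRy : (ℝ ∙ (x - z))ᗮ.reflection y ∈ couplingSet (x - z) := by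
    rwa [← mem_preimage, reflection_preimage_couplingSet]
  set t := 2 * inner ℝ (x - z) y / ‖x - z‖ with ht
  have habs : |t| = 2 * |inner ℝ (x - z) y| / ‖x - z‖ := by
    rw [ht, abs_div, abs_mul, abs_of_pos hr, abs_two]
  have hlo : ‖x - z‖ / 4 ≤ |t| := by rw [habs, le_div_iff₀ hr]; linarith [hy.2]
  have hhi : |t| ≤ ‖x - z‖ / 2 := by
    rw [habs, div_le_iff₀ hr]
    linarith [abs_inner_le_of_mem_couplingSet hy]
  have hplus : ‖x + y - (z + (ℝ ∙ (x - z))ᗮ.reflection y)‖ = ‖x - z‖ + t := by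
    rw [← norm_add_sub_reflection hw hy]
    congr 1
    abel
  have hminus : ‖x + (ℝ ∙ (x - z))ᗮ.reflection y - (z + y)‖ = ‖x - z‖ - t := by
    have h := norm_add_sub_reflection hw hRy
    rw [Submodule.reflection_reflection, inner_reflection_orthogonal_singleton] at h
    rw [ht, sub_eq_add_neg ‖x - z‖, ← neg_div, ← mul_neg, ← h]
    congr 1
    abel
  have hcoupled {a b : E} {s : ℝ} (hs : |s| = |t|) (hab : ‖a - b‖ = ‖x - z‖ + s) :
      u a - u b ≤ Φ (‖x - z‖ + s) := by
    have hne : a ≠ b := by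
      rw [← sub_ne_zero, ← norm_pos_iff, hab]
      linarith [(abs_le.1 (hs.trans_le hhi)).1]
    exact hab ▸ hu.sub_le hne
  refine (add_le_add (hcoupled rfl hplus) (hcoupled (s := -t) (abs_neg t) hminus)).trans ?_
  have hgap := hΦ hr hlo hhi
  rcases abs_choice t with h | h <;> rw [h] at hgap
  · exact hgap
  · rwa [sub_neg_eq_add, add_comm] at hgap

variable [MeasurableSpace E] [BorelSpace E]

lemma measurableSet_couplingSet (w : E) : MeasurableSet (couplingSet w) := by
  have hinner : Continuous fun y : E => |inner ℝ w y| := by fun_prop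
  exact (isClosed_le continuous_norm continuous_const).measurableSet.inter
    (isClosed_le continuous_const hinner).measurableSet

variable [FiniteDimensional ℝ E] {σ : ℝ}

lemma integrableOn_fracKernel_couplingSet (hσ : 0 ≤ σ) (hw : w ≠ 0) :
    IntegrableOn (fracKernel σ) (couplingSet w) := by
  have hpos : 0 < ‖w‖ / 8 := by positivity
  have hfin : volume (couplingSet w) ≠ ⊤ := by
    refine ((measure_mono fun y hy => ?_).trans_lt
      (measure_closedBall_lt_top (x := (0 : E)) (r := ‖w‖ / 4))).ne
    exact mem_closedBall_zero_iff.2 hy.1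
  refine Measure.integrableOn_of_bounded hfin measurable_fracKernel.aestronglyMeasurable
    (M := (‖w‖ / 8) ^ (-(Module.finrank ℝ E : ℝ) - σ))
    (ae_restrict_of_forall_mem (measurableSet_couplingSet w) fun y hy => ?_)
  rw [Real.norm_of_nonneg (fracKernel_nonneg y)]
  refine Real.rpow_le_rpow_of_nonpos hpos (div_eight_le_norm_of_mem_couplingSet hw hy) ?_
  linarith [(Module.finrank ℝ E).cast_nonneg (α := ℝ)]

lemma volume_ball_mul_rpow_le_setIntegral_couplingSet (hσ : 0 ≤ σ) (hw : w ≠ 0) :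
    volume.real (ball (0 : E) (1 / 16)) * ‖w‖ ^ (-σ) ≤ ∫ y in couplingSet w, fracKernel σ y := by
  have hpos : 0 < ‖w‖ := norm_pos_iff.2 hw
  have hint := integrableOn_fracKernel_couplingSet hσ hw
  have hsub := ball_subset_couplingSet w
  have hlow (y : E) (hy : y ∈ ball ((3 / 16 : ℝ) • w) (‖w‖ * (1 / 16))) :
      ‖w‖ ^ (-(Module.finrank ℝ E : ℝ) - σ) ≤ fracKernel σ y := by
    have hyw := div_eight_le_norm_of_mem_couplingSet hw (hsub hy)
    refine Real.rpow_le_rpow_of_nonpos (by linarith) (by linarith [(hsub hy).1]) ?_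
    linarith [(Module.finrank ℝ E).cast_nonneg (α := ℝ)]
  calc volume.real (ball (0 : E) (1 / 16)) * ‖w‖ ^ (-σ)
      = volume.real (ball ((3 / 16 : ℝ) • w) (‖w‖ * (1 / 16))) *
          ‖w‖ ^ (-(Module.finrank ℝ E : ℝ) - σ) := by
        rw [measureReal_def volume (ball ((3 / 16 : ℝ) • w) _),
          Measure.addHaar_ball_mul_of_pos _ _ hpos, ENNReal.toReal_mul,
          ENNReal.toReal_ofReal (by positivity), ← measureReal_def, sub_eq_add_neg,
          Real.rpow_add hpos, Real.rpow_neg hpos.le (Module.finrank ℝ E : ℝ), Real.rpow_natCast]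
        field_simp
    _ ≤ ∫ y in ball ((3 / 16 : ℝ) • w) (‖w‖ * (1 / 16)), fracKernel σ y :=
        setIntegral_ge_of_const_le measurableSet_ball measure_ball_lt_top.ne hlow
          (hint.mono_set hsub)
    _ ≤ ∫ y in couplingSet w, fracKernel σ y :=
        setIntegral_mono_set hint (ae_of_all _ fracKernel_nonneg) hsub.eventuallyLE

variable {η : ℝ}

lemma setIntegral_couplingSet_le (hu : HasModulus Φ u) (hΦ : HasConcavityGap c Φ) (hσ : 0 ≤ σ)
    (hxz : x ≠ z) (hη : Φ ‖x - z‖ - η ≤ u x - u z) (hηc : 4 * η ≤ c * Φ ‖x - z‖)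
    (hint : Integrable fun y => (u (x + y) - u x - (u (z + y) - u z)) * fracKernel σ y) :
    ∫ y in couplingSet (x - z), (u (x + y) - u x - (u (z + y) - u z)) * fracKernel σ y ≤
      -(c / 4 * volume.real (ball (0 : E) (1 / 16)) * (Φ ‖x - z‖ * ‖x - z‖ ^ (-σ))) := by
  have hw : x - z ≠ 0 := sub_ne_zero.2 hxz
  have hgap : 0 ≤ c * Φ ‖x - z‖ := by linarith [hu.sub_le hxz]
  calc ∫ y in couplingSet (x - z), (u (x + y) - u x - (u (z + y) - u z)) * fracKernel σ y
      ≤ ∫ y in couplingSet (x - z), -(c / 4 * Φ ‖x - z‖) * fracKernel σ y := by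
        refine setIntegral_le_of_add_comp_le
          (LinearIsometryEquiv.measurePreserving (ℝ ∙ (x - z))ᗮ.reflection)
          (ℝ ∙ (x - z))ᗮ.reflection.toHomeomorph.measurableEmbedding
          (reflection_preimage_couplingSet _) (measurableSet_couplingSet _) hint.integrableOn
          ((integrableOn_fracKernel_couplingSet hσ hw).const_mul _) fun y hy => ?_
        rw [fracKernel_congr_norm (LinearIsometryEquiv.norm_map (ℝ ∙ (x - z))ᗮ.reflection y),
          ← add_mul, ← mul_assoc]
        refine mul_le_mul_of_nonneg_right ?_ (fracKernel_nonneg y)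
        linarith [hu.add_sub_reflection_le hΦ hxz hy]
    _ = -(c / 4 * Φ ‖x - z‖ * ∫ y in couplingSet (x - z), fracKernel σ y) := by
        rw [integral_const_mul, neg_mul]
    _ ≤ -(c / 4 * Φ ‖x - z‖ * (volume.real (ball (0 : E) (1 / 16)) * ‖x - z‖ ^ (-σ))) :=
        neg_le_neg (mul_le_mul_of_nonneg_left
          (volume_ball_mul_rpow_le_setIntegral_couplingSet hσ hw) (by linarith))
    _ = _ := by ring

end Reflection

/-! ### Comparison of the operators at a near-maximal pair -/

/-- The integro-differential operator of order `σ` with coefficient `a`, evaluated at `x`: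
`∫ (u (x + y) - u x) a(y) ‖y‖ ^ (-d - σ) dy`. It is only meaningful when the integrand is
integrable. -/
def integroDiffOp {E : Type*} [NormedAddCommGroup E] [InnerProductSpace ℝ E]
    [FiniteDimensional ℝ E] [MeasurableSpace E] [BorelSpace E] (σ : ℝ) (a u : E → ℝ) (x : E) : ℝ :=
  ∫ y, (u (x + y) - u x) * a y * fracKernel σ y

section IntegroDiffOp

variable {E : Type*} [NormedAddCommGroup E] [InnerProductSpace ℝ E] [FiniteDimensional ℝ E]
  [MeasurableSpace E] [BorelSpace E] {σ p H B lam Lam W η c : ℝ} {u a a₁ a₂ : E → ℝ} {x z : E}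
  {Φ : ℝ → ℝ}

lemma integroDiffOp_eq (x : E) :
    integroDiffOp σ a u x = ∫ y, (u (x + y) - u x) * fracKernel σ y * a y := by
  simp only [integroDiffOp, mul_right_comm _ (a _)]

lemma integroDiffOp_sub_integroDiffOp_eq (ha₁ : Measurable a₁) (ha₂ : Measurable a₂)
    (h₁ : ∀ y, a₁ y ∈ Icc lam Lam) (h₂ : ∀ y, a₂ y ∈ Icc lam Lam)
    (hint : ∀ x, Integrable fun y => (u (x + y) - u x) * fracKernel σ y) :
    integroDiffOp σ a₁ u x - integroDiffOp σ a₂ u z =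
      (∫ y, (u (x + y) - u x - (u (z + y) - u z)) * fracKernel σ y * a₁ y) +
        ∫ y, (u (z + y) - u z) * fracKernel σ y * (a₁ y - a₂ y) := by
  have hx₁ := integrable_mul_of_mem_Icc (hint x) ha₁ h₁
  have hz₁ := integrable_mul_of_mem_Icc (hint z) ha₁ h₁
  have hz₂ := integrable_mul_of_mem_Icc (hint z) ha₂ h₂
  simp only [sub_mul _ _ (fracKernel σ _), sub_mul _ _ (a₁ _), mul_sub] at hx₁ hz₁ hz₂ ⊢
  rw [integral_sub hx₁ hz₁, integral_sub hz₁ hz₂, integroDiffOp_eq, integroDiffOp_eq]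
  simp only [sub_mul]
  ring

lemma integral_mul_sub_le {f : E → ℝ} (hf : Integrable f) (ha₁ : Measurable a₁)
    (ha₂ : Measurable a₂) (h₁₂ : ∀ y, |a₁ y - a₂ y| ≤ W) :
    ∫ y, f y * (a₁ y - a₂ y) ≤ W * ∫ y, |f y| := by
  rw [← integral_const_mul]
  refine integral_mono (integrable_mul_of_mem_Icc hf (ha₁.sub ha₂) fun y => abs_le.1 (h₁₂ y))
    (hf.abs.const_mul W) fun y => (le_abs_self _).trans ?_
  rw [abs_mul, mul_comm]
  exact mul_le_mul_of_nonneg_right (h₁₂ y) (abs_nonneg _)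

lemma integroDiffOp_sub_integroDiffOp_le (hσ : 0 < σ) (hp : σ < p) (hH0 : 0 ≤ H)
    (hH : HasModulus (fun r => H * r ^ p) u) (hB : ∀ x z, u x - u z ≤ B)
    (hu : HasModulus Φ u) (hΦ : HasConcavityGap c Φ) (hlam : 0 ≤ lam)
    (ha₁ : Measurable a₁) (ha₂ : Measurable a₂) (h₁ : ∀ y, a₁ y ∈ Icc lam Lam)
    (h₂ : ∀ y, a₂ y ∈ Icc lam Lam) (h₁₂ : ∀ y, |a₁ y - a₂ y| ≤ W) (hxz : x ≠ z)
    (hη : Φ ‖x - z‖ - η ≤ u x - u z) (hηc : 4 * η ≤ c * Φ ‖x - z‖) :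
    integroDiffOp σ a₁ u x - integroDiffOp σ a₂ u z ≤
      -(lam * c / 4 * volume.real (ball (0 : E) (1 / 16)) * (Φ ‖x - z‖ * ‖x - z‖ ^ (-σ))) +
        Lam * (∫ y : E, min (2 * H * ‖y‖ ^ p) η * fracKernel σ y) +
        W * ∫ y : E, |(u (z + y) - u z) * fracKernel σ y| := by
  have hη0 : 0 ≤ η := by linarith [hu.sub_le hxz]
  have hint := hH.integrable_sub_mul_fracKernel volume hH0 hσ hp hB
  have hincr : Integrable fun y => (u (x + y) - u x - (u (z + y) - u z)) * fracKernel σ y := by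
    simpa only [sub_mul, Pi.sub_def] using (hint x).sub (hint z)
  have hsplit := integral_mul_le_of_mem_Icc (measurableSet_couplingSet (x - z)) hlam ha₁ h₁ hincr
    (integrable_min_mul_rpow_mul_fracKernel volume hσ hp (H := 2 * H) (by positivity) hη0)
    (fun y => mul_nonneg (le_min (by positivity) hη0) (fracKernel_nonneg y))
    fun y => mul_le_mul_of_nonneg_right
      (hu.increment_sub_le_min hH (hσ.trans hp) hxz hη y) (fracKernel_nonneg y)
  have hcoupling := mul_le_mul_of_nonneg_left
    (setIntegral_couplingSet_le hu hΦ hσ.le hxz hη hηc hincr) hlam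
  rw [integroDiffOp_sub_integroDiffOp_eq ha₁ ha₂ h₁ h₂ hint]
  linarith [integral_mul_sub_le (hint z) ha₁ ha₂ h₁₂]

end IntegroDiffOp

/-! ### Doubling of variables -/

section NearMaximum

variable {E : Type*} [NormedAddCommGroup E] {u : E → ℝ} {φ : ℝ → ℝ} {ρ R M B : ℝ}

lemma bddAbove_increment_div (hφ : ∀ r, 0 < r → 0 < φ r) (hmono : MonotoneOn φ (Ioi 0))
    (hB : ∀ x z, u x - u z ≤ B) (hρ : 0 < ρ)
    (hsmall : ∀ x z, x ≠ z → ‖x - z‖ ≤ ρ → u x - u z ≤ M * φ ‖x - z‖) :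
    BddAbove {s | ∃ x z, x ≠ z ∧ (u x - u z) / φ ‖x - z‖ = s} := by
  refine ⟨max M (B / φ ρ), ?_⟩
  rintro _ ⟨x, z, hxz, rfl⟩
  have hpos := norm_sub_pos_iff.2 hxz
  rcases le_total ‖x - z‖ ρ with h | h
  · exact le_max_of_le_left ((div_le_iff₀ (hφ _ hpos)).2 (hsmall x z hxz h))
  · exact le_max_of_le_right (div_le_div₀ (by simpa using hB x x) (hB x z) (hφ ρ hρ)
      (hmono hρ hpos h))

lemma exists_hasModulus_near_maximum (hφ : ∀ r, 0 < r → 0 < φ r) (hmono : MonotoneOn φ (Ioi 0))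
    (hB : ∀ x z, u x - u z ≤ B) (hρ : 0 < ρ)
    (hout : ∀ x z, x ≠ z → ‖x - z‖ ∉ Ioo ρ R → u x - u z ≤ M * φ ‖x - z‖)
    (hfail : ¬HasModulus (fun r => M * φ r) u) :
    ∃ M₀ > M, HasModulus (fun r => M₀ * φ r) u ∧ ∀ η, 0 < η →
      ∃ x z, ‖x - z‖ ∈ Ioo ρ R ∧ M₀ * φ ‖x - z‖ - η ≤ u x - u z := by
  set S := {s | ∃ x z, x ≠ z ∧ (u x - u z) / φ ‖x - z‖ = s}
  have hφpos {x z : E} (hxz : x ≠ z) : 0 < φ ‖x - z‖ := hφ _ (norm_sub_pos_iff.2 hxz)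
  have hbdd : BddAbove S := bddAbove_increment_div hφ hmono hB hρ
    fun x z hxz h => hout x z hxz fun hmem => hmem.1.not_ge h
  have hin {x z : E} (hxz : x ≠ z) (h : M * φ ‖x - z‖ < u x - u z) : ‖x - z‖ ∈ Ioo ρ R :=
    not_imp_comm.1 (hout x z hxz) h.not_ge
  obtain ⟨x₀, z₀, hxz₀, hbad⟩ : ∃ x z, x ≠ z ∧ M * φ ‖x - z‖ < u x - u z := by
    by_contra! h
    exact hfail (hasModulus_of_sub_le h)
  have hS₀ : (u x₀ - u z₀) / φ ‖x₀ - z₀‖ ∈ S := ⟨x₀, z₀, hxz₀, rfl⟩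
  have hM : M < sSup S := ((lt_div_iff₀ (hφpos hxz₀)).2 hbad).trans_le (le_csSup hbdd hS₀)
  refine ⟨sSup S, hM, hasModulus_of_sub_le fun x z hxz =>
    (div_le_iff₀ (hφpos hxz)).1 (le_csSup hbdd ⟨x, z, hxz, rfl⟩), fun η hη => ?_⟩
  have hR : 0 < R := hρ.trans ((hin hxz₀ hbad).1.trans (hin hxz₀ hbad).2)
  have hlt : max M (sSup S - η / φ R) < sSup S :=
    max_lt hM (sub_lt_self _ (div_pos hη (hφ R hR)))
  obtain ⟨_, ⟨x, z, hxz, rfl⟩, hs⟩ := exists_lt_of_lt_csSup ⟨_, hS₀⟩ hlt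
  rw [lt_div_iff₀ (hφpos hxz)] at hs
  have hmem := hin hxz ((mul_le_mul_of_nonneg_right (le_max_left _ _) (hφpos hxz).le).trans_lt hs)
  refine ⟨x, z, hmem, le_trans ?_ hs.le⟩
  calc sSup S * φ ‖x - z‖ - η ≤ sSup S * φ ‖x - z‖ - η / φ R * φ ‖x - z‖ := by
        have hle : φ ‖x - z‖ ≤ φ R := hmono (norm_sub_pos_iff.2 hxz) hR hmem.2.le
        rw [div_mul_eq_mul_div, sub_le_sub_iff_left, div_le_iff₀ (hφ R hR)]
        gcongr
    _ ≤ max M (sSup S - η / φ R) * φ ‖x - z‖ := by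
        rw [← sub_mul]
        exact mul_le_mul_of_nonneg_right (le_max_right _ _) (hφpos hxz).le

lemma HasModulus.sub_le_of_norm_sub_notMem_Ioo {H p : ℝ} (hH : HasModulus (fun r => H * r ^ p) u)
    (hB : ∀ x z, u x - u z ≤ B) (hmono : MonotoneOn φ (Ioi 0))
    (hsmall : ∀ r, 0 < r → r ≤ ρ → H * r ^ p ≤ φ r) (hlarge : B ≤ φ R) (hR : 0 < R) {x z : E}
    (hxz : x ≠ z) (hr : ‖x - z‖ ∉ Ioo ρ R) : u x - u z ≤ φ ‖x - z‖ := by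
  have hpos := norm_sub_pos_iff.2 hxz
  rcases le_or_gt ‖x - z‖ ρ with hle | hgt
  · exact (hH.sub_le hxz).trans (hsmall _ hpos hle)
  · have hRr : R ≤ ‖x - z‖ := not_lt.1 fun hlt => hr ⟨hgt, hlt⟩
    exact ((hB x z).trans hlarge).trans (hmono hR hpos hRr)

end NearMaximum

/-- The coefficients `a β x y` take values in `[lam, Lam]`, are measurable in `y`, and have modulus
of continuity `Lam * ω` in `x`, uniformly in `β` and `y`. -/
structure IsEllipticFamily {ι E : Type*} [NormedAddCommGroup E] [MeasurableSpace E]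
    (lam Lam : ℝ) (ω : ℝ → ℝ) (a : ι → E → E → ℝ) : Prop where
  mem_Icc : ∀ β x y, a β x y ∈ Icc lam Lam
  measurable : ∀ β x, Measurable (a β x)
  hasModulus : ∀ β y, HasModulus (fun r => Lam * ω r) fun x => a β x y

section Bellman

variable {ι E : Type*} [NormedAddCommGroup E] [InnerProductSpace ℝ E] [FiniteDimensional ℝ E]
  [MeasurableSpace E] [BorelSpace E]

/-- `u` solves the Bellman equation `inf_β (L_β u + f_β) = 0` on the whole space, where `L_β` has
coefficients `a β`. Stating this with `IsGLB` includes the boundedness from below of the values. -/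
def IsBellmanSolution (σ : ℝ) (a : ι → E → E → ℝ) (f : ι → E → ℝ) (u : E → ℝ) : Prop :=
  ∀ x, IsGLB (range fun β => integroDiffOp σ (a β x) u x + f β x) 0

variable {σ p H B lam Lam η c ρ R M : ℝ} {a : ι → E → E → ℝ} {f : ι → E → ℝ} {u : E → ℝ}
  {x z : E} {φ Φ ωa ωf : ℝ → ℝ}

lemma IsBellmanSolution.exists_le_integroDiffOp_sub (h : IsBellmanSolution σ a f u)
    (hf : ∀ β, HasModulus ωf (f β)) (hxz : x ≠ z) {δ : ℝ} (hδ : 0 < δ) :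
    ∃ β, 0 ≤ integroDiffOp σ (a β x) u x - integroDiffOp σ (a β z) u z + ωf ‖x - z‖ + δ := by
  obtain ⟨_, ⟨β, rfl⟩, -, hlt⟩ := (h z).exists_between hδ
  have hx := (h x).1 (mem_range_self β)
  exact ⟨β, by linarith [(hf β).sub_le hxz]⟩

lemma HasModulus.integral_abs_increment_le (hu : HasModulus Φ u) (hσ : 0 < σ)
    (hint : Integrable fun y : E => Φ ‖y‖ * fracKernel σ y) (z : E) :
    ∫ y, |(u (z + y) - u z) * fracKernel σ y| ≤ ∫ y : E, Φ ‖y‖ * fracKernel σ y := by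
  refine integral_mono_of_nonneg (ae_of_all _ fun y => abs_nonneg _) hint
    (ae_of_all _ fun y => ?_)
  rcases eq_or_ne y 0 with rfl | hy
  · simp [fracKernel_zero hσ]
  · have hincr : |u (z + y) - u z| ≤ Φ ‖y‖ := by
      simpa using hu (show z + y ≠ z by simpa using hy)
    simp only [abs_mul, abs_of_nonneg (fracKernel_nonneg y)]
    exact mul_le_mul_of_nonneg_right hincr (fracKernel_nonneg y)

/-- The multiple of the modulus gained from the ellipticity at a near-maximal pair. The ball of
radius `1 / 16`, dilated and translated, is contained in `couplingSet`. -/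
def couplingGain (E : Type*) [NormedAddCommGroup E] [InnerProductSpace ℝ E] [FiniteDimensional ℝ E]
    [MeasurableSpace E] [BorelSpace E] (lam c : ℝ) : ℝ :=
  lam * c / 4 * volume.real (ball (0 : E) (1 / 16))

lemma couplingGain_pos (hlam : 0 < lam) (hc : 0 < c) : 0 < couplingGain E lam c :=
  mul_pos (by positivity) (ENNReal.toReal_pos (measure_ball_pos _ _ (by norm_num)).ne'
    measure_ball_lt_top.ne)

lemma IsBellmanSolution.couplingGain_mul_le (h : IsBellmanSolution σ a f u)
    (ha : IsEllipticFamily lam Lam ωa a) (hf : ∀ β, HasModulus ωf (f β)) (hσ : 0 < σ) (hp : σ < p)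
    (hH0 : 0 ≤ H) (hH : HasModulus (fun r => H * r ^ p) u) (hB : ∀ x z, u x - u z ≤ B)
    (hlam : 0 ≤ lam) (hu : HasModulus Φ u) (hΦ : HasConcavityGap c Φ)
    (hint : Integrable fun y : E => Φ ‖y‖ * fracKernel σ y) (hxz : x ≠ z)
    (hη : Φ ‖x - z‖ - η ≤ u x - u z) (hηc : 4 * η ≤ c * Φ ‖x - z‖) :
    couplingGain E lam c * Φ ‖x - z‖ ≤
      (Lam * (∫ y : E, min (2 * H * ‖y‖ ^ p) η * fracKernel σ y) +
        Lam * ωa ‖x - z‖ * (∫ y : E, Φ ‖y‖ * fracKernel σ y) + ωf ‖x - z‖) * ‖x - z‖ ^ σ := by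
  have hr := norm_sub_pos_iff.2 hxz
  rw [← div_le_iff₀ (by positivity), div_eq_mul_inv, ← Real.rpow_neg hr.le]
  refine le_of_forall_pos_le_add fun δ hδ => ?_
  obtain ⟨β, hβ⟩ := h.exists_le_integroDiffOp_sub hf hxz hδ
  have hW : 0 ≤ Lam * ωa ‖x - z‖ := (abs_nonneg _).trans (ha.hasModulus β 0 hxz)
  have hop := integroDiffOp_sub_integroDiffOp_le hσ hp hH0 hH hB hu hΦ hlam (ha.measurable β x)
    (ha.measurable β z) (ha.mem_Icc β x) (ha.mem_Icc β z) (fun y => ha.hasModulus β y hxz) hxz hη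
    hηc
  have habs := mul_le_mul_of_nonneg_left (hu.integral_abs_increment_le hσ hint z) hW
  rw [couplingGain, mul_assoc _ (Φ _)]
  linarith

lemma IsBellmanSolution.hasModulus_mul (h : IsBellmanSolution σ a f u)
    (ha : IsEllipticFamily lam Lam ωa a) (hf : ∀ β, HasModulus ωf (f β)) (hσ : 0 < σ) (hp : σ < p)
    (hH0 : 0 ≤ H) (hH : HasModulus (fun r => H * r ^ p) u) (hB : ∀ x z, u x - u z ≤ B)
    (hlam : 0 < lam) (hlamLam : lam ≤ Lam) (hφ : HasConcavityGap c φ) (hc : 0 < c)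
    (hφpos : ∀ r, 0 < r → 0 < φ r) (hmono : MonotoneOn φ (Ioi 0))
    (hint : Integrable fun y : E => φ ‖y‖ * fracKernel σ y) (hM : 0 < M) (hρ : 0 < ρ)
    (hout : ∀ x z, x ≠ z → ‖x - z‖ ∉ Ioo ρ R → u x - u z ≤ M * φ ‖x - z‖)
    (hωa : ∀ r ∈ Ioo ρ R, Lam * (∫ y : E, φ ‖y‖ * fracKernel σ y) * (ωa r * r ^ σ) ≤
      couplingGain E lam c / 4 * φ r)
    (hωf : ∀ r ∈ Ioo ρ R, ωf r * r ^ σ ≤ couplingGain E lam c / 4 * M * φ r) :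
    HasModulus (fun r => M * φ r) u := by
  by_contra hfail
  obtain ⟨M₀, hM₀, hu, hnear⟩ := exists_hasModulus_near_maximum hφpos hmono hB hρ hout hfail
  have hM₀pos : 0 < M₀ := hM.trans hM₀
  have hφρ := hφpos ρ hρ
  have hgain : 0 < couplingGain E lam c := couplingGain_pos hlam hc
  obtain ⟨η, hη, hηsmall, herror⟩ := exists_mul_integral_min_lt (E := E) volume hσ hp
    (by positivity : 0 ≤ 2 * H) (Lam * R ^ σ) (by positivity : 0 < c * (M₀ * φ ρ) / 4)
    (by positivity : 0 < couplingGain E lam c / 2 * (M₀ * φ ρ))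
  obtain ⟨x, z, hmem, hxz⟩ := hnear η hη
  set r := ‖x - z‖
  have hr : 0 < r := hρ.trans hmem.1
  have hφr : M₀ * φ ρ ≤ M₀ * φ r := mul_le_mul_of_nonneg_left (hmono hρ hr hmem.1.le) hM₀pos.le
  have hmain := h.couplingGain_mul_le ha hf hσ hp hH0 hH hB hlam.le hu (hφ.const_mul hM₀pos.le)
    (by simpa only [mul_assoc] using hint.const_mul M₀) (norm_sub_pos_iff.1 hr) hxz
    (by linarith [mul_le_mul_of_nonneg_left hφr hc.le])
  simp only [mul_assoc M₀] at hmain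
  rw [integral_const_mul] at hmain
  have hJ : 0 ≤ ∫ y : E, min (2 * H * ‖y‖ ^ p) η * fracKernel σ y :=
    integral_nonneg fun y => mul_nonneg (le_min (by positivity) hη.le) (fracKernel_nonneg y)
  have hscale : Lam * r ^ σ ≤ Lam * R ^ σ :=
    mul_le_mul_of_nonneg_left (Real.rpow_le_rpow hr.le hmem.2.le hσ.le) (hlam.le.trans hlamLam)
  have hcoef := mul_le_mul_of_nonneg_left (hωa r hmem) hM₀pos.le
  have hdata := hωf r hmem
  have hMφ := mul_le_mul_of_nonneg_left
    (mul_le_mul_of_nonneg_right hM₀.le (hφpos r hr).le) hgain.le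
  linarith [mul_le_mul_of_nonneg_right hscale hJ, mul_le_mul_of_nonneg_left hφr hgain.le]

end Bellman

/-! ### Choice of the weights -/

section Weights

variable {σ κ p H M R δ θ s r : ℝ} {b : ℕ → ℝ} {ωa ωf : ℝ → ℝ}

lemma eventually_mul_rpow_le_div_sq (A : ℝ) {q : ℝ} (hq : q ∈ Ico (0 : ℝ) 1) (hδ : 0 < δ) :
    ∀ᶠ n : ℕ in atTop, A * q ^ (n + 1) ≤ δ / (n + 1) ^ 2 := by
  have hlim := ((tendsto_pow_const_mul_const_pow_of_abs_lt_one 2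
    (abs_lt.2 ⟨by linarith [hq.1], hq.2⟩)).comp (tendsto_add_atTop_nat 1)).const_mul A
  rw [mul_zero] at hlim
  filter_upwards [hlim.eventually (eventually_le_nhds hδ)] with n hn
  simp only [Function.comp_apply, Nat.cast_add_one] at hn
  rw [le_div_iff₀ (by positivity)]
  linarith

/-- Quadratically decaying weights beat the geometric decay of a power above `σ` at the dyadic
scales. -/
lemma exists_mul_rpow_le_diniModulus (hκ : 0 ≤ κ) (hκ1 : κ ≤ 1) (hb : ∀ n, 0 ≤ b n)
    (hsum : Summable b) (hR : 0 < R) (hδ : 0 < δ) (hbδ : ∀ n : ℕ, δ / (n + 1) ^ 2 ≤ b n)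
    (hH : 0 ≤ H) (hp : σ < p) (hM : 0 < M) :
    ∃ ρ, 0 < ρ ∧ ∀ r, 0 < r → r ≤ ρ → H * r ^ p ≤ M * diniModulus σ κ R b r := by
  have hq : (1 / 2 : ℝ) ^ (p - σ) ∈ Ico (0 : ℝ) 1 :=
    ⟨by positivity, Real.rpow_lt_one (by norm_num) (by norm_num) (by linarith)⟩
  obtain ⟨N, hN⟩ := eventually_atTop.1
    (eventually_mul_rpow_le_div_sq (2 * (H * (2 * R) ^ (p - σ)) / M) hq hδ)
  refine ⟨R * (1 / 2) ^ N, by positivity, fun r hr hrN => ?_⟩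
  obtain ⟨n, hn, hlo, hhi⟩ := exists_dyadic_scale hr N hrN
  have hpow : r ^ (p - σ) ≤ (2 * R) ^ (p - σ) * ((1 / 2) ^ (p - σ)) ^ (n + 1) := by
    rw [Real.rpow_pow_comm (by norm_num), ← Real.mul_rpow (by positivity) (by positivity)]
    refine Real.rpow_le_rpow hr.le (hhi.trans_eq ?_) (by linarith)
    rw [pow_succ]; ring
  calc H * r ^ p = H * r ^ (p - σ) * r ^ σ := by
        rw [mul_assoc, ← Real.rpow_add hr, sub_add_cancel]
    _ ≤ H * ((2 * R) ^ (p - σ) * ((1 / 2) ^ (p - σ)) ^ (n + 1)) * r ^ σ := by gcongr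
    _ ≤ M * (b n / 2) * r ^ σ := by
        refine mul_le_mul_of_nonneg_right ?_ (by positivity)
        have hNn := (hN n hn).trans (hbδ n)
        rw [div_mul_eq_mul_div, div_le_iff₀ hM] at hNn
        linarith
    _ = M * (b n * (r ^ σ / 2)) := by ring
    _ ≤ M * diniModulus σ κ R b r := mul_le_mul_of_nonneg_left
        (mul_rpow_div_two_le_diniModulus hκ hκ1 hb hsum hR hlo hhi) hM.le

/-- The weights of the modulus used as a barrier: they dominate `ωa` and a multiple of `ωf` at the
dyadic scales `R * (1 / 2) ^ n`, and decay no faster than quadratically. -/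
def barrierWeight (ωa ωf : ℝ → ℝ) (θ s R : ℝ) (n : ℕ) : ℝ :=
  ωa (R * (1 / 2) ^ n) + θ / (n + 1) ^ 2 + s * ωf (R * (1 / 2) ^ n)

section BarrierWeight

lemma div_sq_le_barrierWeight (hωa : IsDini ωa) (hωf : IsDini ωf) (hs : 0 ≤ s) (hR : 0 < R)
    (n : ℕ) : θ / (n + 1) ^ 2 ≤ barrierWeight ωa ωf θ s R n := by
  have hr : 0 < R * (1 / 2) ^ n := by positivity
  unfold barrierWeight
  linarith [hωa.1 _ hr, mul_nonneg hs (hωf.1 _ hr)]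

lemma barrierWeight_pos (hωa : IsDini ωa) (hωf : IsDini ωf) (hθ : 0 < θ) (hs : 0 ≤ s) (hR : 0 < R)
    (n : ℕ) : 0 < barrierWeight ωa ωf θ s R n :=
  (by positivity : 0 < θ / ((n : ℝ) + 1) ^ 2).trans_le (div_sq_le_barrierWeight hωa hωf hs hR n)

lemma apply_le_barrierWeight (hωf : IsDini ωf) (hθ : 0 ≤ θ) (hs : 0 ≤ s) (hR : 0 < R) (n : ℕ) :
    ωa (R * (1 / 2) ^ n) ≤ barrierWeight ωa ωf θ s R n := by
  have hr : 0 < R * (1 / 2) ^ n := by positivity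
  have hθn : 0 ≤ θ / ((n : ℝ) + 1) ^ 2 := by positivity
  unfold barrierWeight
  linarith [mul_nonneg hs (hωf.1 _ hr)]

lemma apply_le_inv_mul_barrierWeight (hωa : IsDini ωa) (hθ : 0 ≤ θ) (hs : 0 < s) (hR : 0 < R)
    (n : ℕ) : ωf (R * (1 / 2) ^ n) ≤ s⁻¹ * barrierWeight ωa ωf θ s R n := by
  have hθn : 0 ≤ θ / ((n : ℝ) + 1) ^ 2 := by positivity
  rw [le_inv_mul_iff₀ hs, barrierWeight]
  linarith [hωa.1 (R * (1 / 2) ^ n) (by positivity)]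

lemma summable_one_div_add_one_sq : Summable fun n : ℕ => 1 / ((n : ℝ) + 1) ^ 2 := by
  simpa using (summable_nat_add_iff 1).2 (Real.summable_one_div_nat_pow.2 one_lt_two)

lemma hasSum_barrierWeight (hωa : IsDini ωa) (hωf : IsDini ωf) (hR : R ∈ Ioc (0 : ℝ) (1 / 2)) :
    HasSum (barrierWeight ωa ωf θ s R) (∑' n : ℕ, ωa (R * (1 / 2) ^ n) +
      θ * (∑' n : ℕ, 1 / ((n : ℝ) + 1) ^ 2) + s * ∑' n : ℕ, ωf (R * (1 / 2) ^ n)) := by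
  unfold barrierWeight
  simp only [div_eq_mul_one_div θ]
  exact ((hωa.summable_mul_half_pow hR).hasSum.add
    (summable_one_div_add_one_sq.hasSum.mul_left θ)).add
      ((hωf.summable_mul_half_pow hR).hasSum.mul_left s)

lemma tsum_barrierWeight_le (hωa : IsDini ωa) (hωf : IsDini ωf) (hR : R ∈ Ioc (0 : ℝ) (1 / 2))
    (ha : ∑' n : ℕ, ωa (R * (1 / 2) ^ n) ≤ θ) (hf : s * ∑' n : ℕ, ωf (R * (1 / 2) ^ n) ≤ θ) :
    ∑' n, barrierWeight ωa ωf θ s R n ≤ (2 + ∑' n : ℕ, 1 / ((n : ℝ) + 1) ^ 2) * θ := by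
  rw [(hasSum_barrierWeight hωa hωf hR).tsum_eq]
  linarith

end BarrierWeight

end Weights

/-! ### The estimate for the solution -/

section Estimate

variable {ι E : Type*} [NormedAddCommGroup E] [InnerProductSpace ℝ E] [FiniteDimensional ℝ E]
  [MeasurableSpace E] [BorelSpace E] {σ κ p H B lam Lam c R M θ s : ℝ} {a : ι → E → E → ℝ}
  {f : ι → E → ℝ} {u : E → ℝ} {ωa ωf : ℝ → ℝ}

lemma IsBellmanSolution.hasModulus_diniModulus (h : IsBellmanSolution σ a f u)
    (ha : IsEllipticFamily lam Lam ωa a) (hf : ∀ β, HasModulus ωf (f β)) (hωa : IsDini ωa)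
    (hωf : IsDini ωf) (hlam : 0 < lam) (hlamLam : lam ≤ Lam) (hp : σ < p) (hH0 : 0 ≤ H)
    (hH : HasModulus (fun r => H * r ^ p) u) (hB : ∀ x z, u x - u z ≤ B) (hκ : 0 < κ) (hκ1 : κ ≤ 1)
    (hκσ : κ ≤ σ) (hc : 0 < c) (hgap : HasConcavityGap c (powTent σ κ)) (hθ : 0 < θ) (hs : 0 < s)
    (hR : R ∈ Ioc (0 : ℝ) (1 / 2)) (hM : 0 < M) (hMB : 2 * B ≤ M * θ * R ^ σ)
    (hMs : 8 ≤ couplingGain E lam c * M * s)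
    (hLam : 8 * (Lam * ((∑' n, barrierWeight ωa ωf θ s R n) *
      ∫ y : E, powTent σ κ ‖y‖ * fracKernel σ y)) ≤ couplingGain E lam c) :
    HasModulus (fun r => M * diniModulus σ κ R (barrierWeight ωa ωf θ s R) r) u := by
  have hb := barrierWeight_pos hωa hωf hθ hs.le hR.1
  have hb' (n : ℕ) := (hb n).le
  have hdecay (n : ℕ) := div_sq_le_barrierWeight (θ := θ) hωa hωf hs.le hR.1 n
  have hsum := (hasSum_barrierWeight (θ := θ) (s := s) hωa hωf hR).summable
  have hωab (n : ℕ) := apply_le_barrierWeight (ωa := ωa) hωf hθ.le hs.le hR.1 n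
  have hωfb := apply_le_inv_mul_barrierWeight (ωf := ωf) hωa hθ.le hs hR.1
  set b := barrierWeight ωa ωf θ s R
  set φ := diniModulus σ κ R b
  obtain ⟨ρ, hρ, hsmall⟩ := exists_mul_rpow_le_diniModulus hκ.le hκ1 hb' hsum hR.1 hθ hdecay hH0 hp
    hM
  have hmono : MonotoneOn φ (Ioi 0) := monotoneOn_diniModulus hκ.le hκσ hb' hsum hR.1
  have hmonoM : MonotoneOn (fun r => M * φ r) (Ioi 0) := fun _ hr _ ht hrt =>
    mul_le_mul_of_nonneg_left (hmono hr ht hrt) hM.le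
  have hφpos (r : ℝ) (hr : 0 < r) : 0 < φ r := diniModulus_pos hκ.le hκ1 hκσ hb hsum hR.1 hr
  have hlarge : B ≤ M * φ R := by
    have hφR : θ * R ^ σ ≤ 2 * φ R := mul_rpow_le_two_mul_diniModulus hκ.le hκ1 hb' hsum hR.1
      (by simpa using hdecay 0)
    linarith [mul_le_mul_of_nonneg_left hφR hM.le]
  have hint₀ : 0 ≤ Lam * ∫ y : E, φ ‖y‖ * fracKernel σ y :=
    mul_nonneg (hlam.le.trans hlamLam) (integral_nonneg fun y => mul_nonneg
      (diniModulus_nonneg hb' hR.1 (norm_nonneg y)) (fracKernel_nonneg y))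
  rw [← integral_diniModulus_mul_fracKernel volume hκ hb' hsum hR.1] at hLam
  refine h.hasModulus_mul ha hf (hκ.trans_le hκσ) hp hH0 hH hB hlam hlamLam
    (hgap.diniModulus hκ.le hb' hsum hR.1) hc hφpos hmono
    (integrable_diniModulus_mul_fracKernel volume hκ hb' hsum hR.1) hM hρ (R := R)
    (fun x z => hH.sub_le_of_norm_sub_notMem_Ioo hB hmonoM hsmall hlarge hR.1)
    (fun r hr => ?_) (fun r hr => ?_)
  · have hωr : ωa r * r ^ σ ≤ 2 * 1 * φ r := mul_rpow_le_mul_diniModulus hκ.le hκ1 hb' hsum hωa.2.1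
      zero_le_one (by simpa using hωab) (hρ.trans hr.1) hr.2.le
    linarith [mul_le_mul_of_nonneg_left hωr hint₀,
      mul_le_mul_of_nonneg_right hLam (hφpos r (hρ.trans hr.1)).le]
  · have hωr : ωf r * r ^ σ ≤ 2 * s⁻¹ * φ r := mul_rpow_le_mul_diniModulus hκ.le hκ1 hb' hsum
      hωf.2.1 (inv_nonneg.2 hs.le) hωfb (hρ.trans hr.1) hr.2.le
    have hsinv : 8 * s⁻¹ ≤ couplingGain E lam c * M := by
      rwa [← div_eq_mul_inv, div_le_iff₀ hs]
    linarith [mul_le_mul_of_nonneg_right hsinv (hφpos r (hρ.trans hr.1)).le]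

lemma IsBellmanSolution.hasModulus_rpow (h : IsBellmanSolution σ a f u)
    (ha : IsEllipticFamily lam Lam ωa a) (hf : ∀ β, HasModulus ωf (f β)) (hωa : IsDini ωa)
    (hωf : IsDini ωf) (hlam : 0 < lam) (hlamLam : lam ≤ Lam) (hp : σ < p) (hH0 : 0 ≤ H)
    (hH : HasModulus (fun r => H * r ^ p) u) (hB : 0 < B) (hu : ∀ x, |u x| ≤ B)
    (hfB : ∑' n : ℕ, ωf ((1 / 2) ^ (n + 1)) ≤ B) (hκ : 0 < κ) (hκ1 : κ ≤ 1) (hκσ : κ ≤ σ)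
    (hc : 0 < c) (hgap : HasConcavityGap c (powTent σ κ)) (hθ : 0 < θ)
    (hR : R ∈ Ioc (0 : ℝ) (1 / 2)) (haθ : ∑' n : ℕ, ωa (R * (1 / 2) ^ n) ≤ θ)
    (hLam : 8 * (Lam * ((2 + ∑' n : ℕ, 1 / ((n : ℝ) + 1) ^ 2) * θ *
      ∫ y : E, powTent σ κ ‖y‖ * fracKernel σ y)) ≤ couplingGain E lam c) :
    HasModulus (fun r => (2 + ∑' n : ℕ, 1 / ((n : ℝ) + 1) ^ 2) *
      (4 / R ^ σ + 8 / couplingGain E lam c) * B * r ^ σ) u := by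
  have hgain : 0 < couplingGain E lam c := couplingGain_pos hlam hc
  have hRσ : 0 < R ^ σ := Real.rpow_pos_of_pos hR.1 σ
  set K := couplingGain E lam c
  set M := B / θ * (4 / R ^ σ + 8 / K) with hM_def
  have hM : 0 < M := by positivity
  have hs : 0 < θ / B := by positivity
  have hsum_le := tsum_barrierWeight_le (θ := θ) (s := θ / B) hωa hωf hR haθ (by
    rw [div_mul_eq_mul_div, div_le_iff₀ hB]
    exact mul_le_mul_of_nonneg_left ((hωf.tsum_mul_half_pow_le hR).trans hfB) hθ.le)
  have hI : 0 ≤ ∫ y : E, powTent σ κ ‖y‖ * fracKernel σ y :=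
    integral_nonneg fun y => mul_nonneg (powTent_nonneg (norm_nonneg y)) (fracKernel_nonneg y)
  have hMB : 2 * (2 * B) ≤ M * θ * R ^ σ := by
    have hexpand : M * θ * R ^ σ = 4 * B + 8 / K * B * R ^ σ := by rw [hM_def]; field_simp
    have : 0 ≤ 8 / K * B * R ^ σ := by positivity
    linarith
  have hMs : 8 ≤ K * M * (θ / B) := by
    have hexpand : K * M * (θ / B) = K * (4 / R ^ σ) + 8 := by rw [hM_def]; field_simp
    have : 0 ≤ K * (4 / R ^ σ) := by positivity
    linarith
  have hmod := h.hasModulus_diniModulus ha hf hωa hωf hlam hlamLam hp hH0 hH (B := 2 * B)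
    (fun x z => by linarith [abs_le.1 (hu x), abs_le.1 (hu z)]) hκ hκ1 hκσ hc hgap hθ hs hR hM hMB
    hMs (le_trans (by gcongr; exact hlam.le.trans hlamLam) hLam)
  refine hmod.mono fun r hr => ?_
  calc M * diniModulus σ κ R (barrierWeight ωa ωf θ (θ / B) R) r
      ≤ M * ((2 + ∑' n : ℕ, 1 / ((n : ℝ) + 1) ^ 2) * θ * r ^ σ) := by
        refine mul_le_mul_of_nonneg_left ((diniModulus_le hκ.le
          (fun n => (barrierWeight_pos hωa hωf hθ hs.le hR.1 n).le)
          (hasSum_barrierWeight hωa hωf hR).summable hR.1 hr).trans ?_) hM.le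
        gcongr
    _ = _ := by rw [hM_def]; field_simp

theorem exists_hasModulus_rpow (hσ : σ ∈ Ioo (0 : ℝ) 1) (hlam : 0 < lam) (hlamLam : lam ≤ Lam)
    (hωa : IsDini ωa) :
    ∃ C, 0 < C ∧ ∀ (ι : Type*) (a : ι → E → E → ℝ) (f : ι → E → ℝ) (u : E → ℝ) (ωf : ℝ → ℝ)
      (p H B : ℝ), IsEllipticFamily lam Lam ωa a → IsDini ωf → (∀ β, HasModulus ωf (f β)) →
      σ < p → 0 ≤ H → HasModulus (fun r => H * r ^ p) u → (∀ x, |u x| ≤ B) →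
      ∑' n : ℕ, ωf ((1 / 2) ^ (n + 1)) ≤ B → IsBellmanSolution σ a f u →
      HasModulus (fun r => C * B * r ^ σ) u := by
  obtain ⟨hσ0, hσ1⟩ := hσ
  have hκ : 0 < min σ (1 - σ) / 2 := by have := lt_min hσ0 (sub_pos.2 hσ1); positivity
  have hκσ : min σ (1 - σ) / 2 < σ := by linarith [min_le_left σ (1 - σ)]
  have hσκ : σ + min σ (1 - σ) / 2 < 1 := by linarith [min_le_right σ (1 - σ)]
  obtain ⟨c, hc, hgap⟩ := exists_hasConcavityGap_powTent hκ.le hκσ hσκ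
  have hgain : 0 < couplingGain E lam c := couplingGain_pos hlam hc
  obtain ⟨θ, hθ, hθgain⟩ := exists_pos_mul_lt hgain
    (8 * (Lam * ((2 + ∑' n : ℕ, 1 / ((n : ℝ) + 1) ^ 2) *
      ∫ y : E, powTent σ (min σ (1 - σ) / 2) ‖y‖ * fracKernel σ y)))
  obtain ⟨R, hR, haθ⟩ := exists_tsum_mul_half_pow_le ωa hθ
  have hRσ : 0 < R ^ σ := Real.rpow_pos_of_pos hR.1 σ
  refine ⟨(2 + ∑' n : ℕ, 1 / ((n : ℝ) + 1) ^ 2) * (4 / R ^ σ + 8 / couplingGain E lam c),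
    by positivity, fun ι a f u ωf p H B ha hωf hf hp hH0 hH hu hfB h x z hxz => ?_⟩
  have hlim : Tendsto (fun B' => (2 + ∑' n : ℕ, 1 / ((n : ℝ) + 1) ^ 2) *
      (4 / R ^ σ + 8 / couplingGain E lam c) * B' * ‖x - z‖ ^ σ) (𝓝[>] B) (𝓝 _) :=
    (Continuous.tendsto (by fun_prop) B).mono_left nhdsWithin_le_nhds
  refine ge_of_tendsto hlim (eventually_nhdsWithin_of_forall fun B' hB' => ?_)
  exact h.hasModulus_rpow ha hf hωa hωf hlam hlamLam hp hH0 hH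
    ((abs_nonneg _).trans_lt ((hu x).trans_lt hB')) (fun y => (hu y).trans (le_of_lt hB'))
    (hfB.trans (le_of_lt hB')) hκ (by linarith) hκσ.le hc hgap hθ hR haθ (by linarith) hxz

end Estimate

section SupNorm

variable {E : Type*} {u : E → ℝ}

lemma eSupNorm_univ_ne_top (h : ∃ M, ∀ x, |u x| ≤ M) : eSupNorm univ u ≠ ⊤ := by
  obtain ⟨M, hM⟩ := h
  exact ((iSup₂_le fun x _ => ENNReal.ofReal_le_ofReal (hM x)).trans_lt ENNReal.ofReal_lt_top).ne

lemma abs_le_toReal_eSupNorm_univ (h : ∃ M, ∀ x, |u x| ≤ M) (x : E) :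
    |u x| ≤ (eSupNorm univ u).toReal :=
  (ENNReal.ofReal_le_iff_le_toReal (eSupNorm_univ_ne_top h)).1
    (le_iSup₂_of_le (f := fun x (_ : x ∈ univ) => ENNReal.ofReal |u x|) x (mem_univ x) le_rfl)

end SupNorm

lemma IsDini.tsum_ofReal_two_rpow_neg {ω : ℝ → ℝ} (hω : IsDini ω) :
    ∑' k : ℕ, ENNReal.ofReal (ω (2 ^ (-((k : ℝ) + 1)))) =
      ENNReal.ofReal (∑' k : ℕ, ω ((1 / 2) ^ (k + 1))) := by
  rw [ENNReal.ofReal_tsum_of_nonneg (fun k => hω.1 _ (by positivity)) hω.summable_half_pow]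
  refine tsum_congr fun k => ?_
  rw [Real.rpow_neg zero_le_two, one_div, inv_pow, ← Nat.cast_add_one, Real.rpow_natCast]

theorem global_dini_estimate_order_lt_one_general {E : Type*} [NormedAddCommGroup E]
    [InnerProductSpace ℝ E] [FiniteDimensional ℝ E] [MeasurableSpace E] [BorelSpace E]
    {σ lam Lam : ℝ} (hσ : σ ∈ Ioo (0 : ℝ) 1) (hlam : 0 < lam) (hlamLam : lam ≤ Lam) {ωa : ℝ → ℝ}
    (hωa : IsDini ωa) :
    ∃ C, 0 < C ∧ ∀ (ι : Type*) (a : ι → E → E → ℝ) (f : ι → E → ℝ) (u : E → ℝ) (ωf : ℝ → ℝ) (ε : ℝ),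
      IsEllipticFamily lam Lam ωa a → IsDini ωf → (∀ β, HasModulus ωf (f β)) →
      (∃ M, ∀ x, |u x| ≤ M) → 0 < ε → holderSemi (σ + ε) univ u < ⊤ → IsBellmanSolution σ a f u →
      holderSemi σ univ u ≤ ENNReal.ofReal C * eSupNorm univ u +
        ENNReal.ofReal C * ∑' k : ℕ, ENNReal.ofReal (ωf (2 ^ (-((k : ℝ) + 1)))) := by
  obtain ⟨C, hC, hmod⟩ := exists_hasModulus_rpow (E := E) hσ hlam hlamLam hωa
  refine ⟨C, hC, fun ι a f u ωf ε ha hωf hf hu hε hholder h => ?_⟩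
  obtain ⟨H, hH0, hH⟩ := exists_hasModulus_of_holderSemi_lt_top hholder
  have hsum : 0 ≤ ∑' k : ℕ, ωf ((1 / 2) ^ (k + 1)) :=
    tsum_nonneg fun k => hωf.1 _ (by positivity)
  have hsup : 0 ≤ (eSupNorm univ u).toReal := ENNReal.toReal_nonneg
  rw [hωf.tsum_ofReal_two_rpow_neg, ← mul_add, ← ENNReal.ofReal_toReal (eSupNorm_univ_ne_top hu),
    ← ENNReal.ofReal_add hsup hsum, ← ENNReal.ofReal_mul hC.le,
    holderSemi_univ_le_ofReal_iff (by positivity)]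
  exact hmod ι a f u ωf (σ + ε) H _ ha hωf hf (lt_add_of_pos_right σ hε) hH0 hH
    (fun x => (abs_le_toReal_eSupNorm_univ hu x).trans (le_add_of_nonneg_right hsum))
    (le_add_of_nonneg_left hsup) h

/-- Global Dini estimate for equations posed in all of `ℝ^d`, `σ ∈ (0,1)`. -/
theorem global_dini_estimate_order_lt_one
    (d : ℕ) (hd : 1 ≤ d) (σ lam Lam : ℝ)
    (hσ : σ ∈ Set.Ioo (0:ℝ) 1) (hlam : 0 < lam) (hlamLam : lam ≤ Lam)
    (ωa : ℝ → ℝ) (hωa : IsDini ωa) :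
    ∃ C : ℝ, 0 < C ∧
      ∀ (A : Type) [Nonempty A]
        (a : A → EuclideanSpace ℝ (Fin d) → EuclideanSpace ℝ (Fin d) → ℝ)
        (f : A → EuclideanSpace ℝ (Fin d) → ℝ)
        (u : EuclideanSpace ℝ (Fin d) → ℝ) (ωf : ℝ → ℝ) (ε : ℝ),
        -- (a) ellipticity, measurability in `y`, Dini continuity of the coefficients
        (∀ β x y, a β x y ∈ Set.Icc lam Lam) →
        (∀ β x, Measurable (a β x)) →
        (∀ β x x' y, x ≠ x' → |a β x y - a β x' y| ≤ Lam * ωa ‖x - x'‖) →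
        -- (b) Dini continuity of the data
        IsDini ωf →
        (∀ β (x x' : EuclideanSpace ℝ (Fin d)), x ≠ x' → |f β x - f β x'| ≤ ωf ‖x - x'‖) →
        -- (c) regularity of `u`
        (∃ M : ℝ, ∀ x, |u x| ≤ M) →
        ε ∈ Set.Ioo (0:ℝ) (1 - σ) →
        holderSemi (σ + ε) (Set.univ : Set (EuclideanSpace ℝ (Fin d))) u < ⊤ →
        -- absolute integrability of the integrand of `L_β u`
        (∀ β (x : EuclideanSpace ℝ (Fin d)),
          Integrable (fun y => (u (x + y) - u x) * a β x y * ‖y‖ ^ (-(d:ℝ) - σ))) →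
        -- (d) `u` solves `inf_β (L_β u + f_β) = 0` in all of `ℝ^d`
        (∀ x : EuclideanSpace ℝ (Fin d),
          IsGLB {v : ℝ | ∃ β, v =
            (∫ y, (u (x + y) - u x) * a β x y * ‖y‖ ^ (-(d:ℝ) - σ)) + f β x} 0) →
        -- conclusion
        holderSemi σ (Set.univ : Set (EuclideanSpace ℝ (Fin d))) u ≤
          ENNReal.ofReal C * eSupNorm (Set.univ) u
          + ENNReal.ofReal C * ∑' k : ℕ, ENNReal.ofReal (ωf (2 ^ (-((k:ℝ) + 1)))) := by
  obtain ⟨C, hC, hestimate⟩ := global_dini_estimate_order_lt_one_general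
    (E := EuclideanSpace ℝ (Fin d)) hσ hlam hlamLam hωa
  refine ⟨C, hC, fun A _ a f u ωf ε hIcc hmeas ha hωf hf hu hε hholder _ h => ?_⟩
  refine hestimate A a f u ωf ε ⟨hIcc, hmeas, fun β y x z hxz => ha β x z y hxz⟩ hωf
    (fun β x z => hf β x z) hu hε.1 hholder fun x => ?_
  simpa [integroDiffOp, fracKernel, range, eq_comm] using h x
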